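/- arXiv:2412.20729 — 4 statements merged into one kernel-verified Lean document; each statement's English description precedes it below -/
import Mathlib

section
/- Let G be a chordal graph with rooted tree representation T, let X be a subtree of T rooted at x, and let Q be a subpath of X with x as an endpoint. Let ℋ be a nonempty family of subgraphs of G such that X has the core capture property for ℋ, and let k = min{κ(H₁ ∪ H₂) : H₁, H₂ ∈ ℋ}. Let Q₀ be a subpath of Q that is minimal (no proper subpath of Q₀ has the property) such that D_Q^X(Q₀) has the core capture property for ℋ. If |V(Q₀)| ≥ 2, then G has k vertices v such that Q₀ ⊆ S(v). -/
open SimpleGraph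

/-- A graph is chordal if every cycle on at least 4 vertices has a chord
(an edge of the graph joining two vertices of the cycle that is not an edge of the cycle). -/
def IsChordal {V : Type} (G : SimpleGraph V) : Prop :=
  ∀ (v : V) (c : G.Walk v v), c.IsCycle → 4 ≤ c.length →
    ∃ a b : V, a ∈ c.support ∧ b ∈ c.support ∧ G.Adj a b ∧ s(a, b) ∉ c.edges

/-- A tree representation of `G` with host tree `T`: each vertex `u` of `G` gets a
nonempty subtree `S u` of `T`, and distinct vertices are adjacent iff their subtrees meet. -/
structure TreeRep {V W : Type} (G : SimpleGraph V) (T : SimpleGraph W) : Type where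
  isTree : T.IsTree
  S : V → Set W
  subtree_connected : ∀ u : V, (T.induce (S u)).Connected
  adj_iff : ∀ u v : V, u ≠ v → (G.Adj u v ↔ (S u ∩ S v).Nonempty)

/-- A tree representation is minimal if no tree representation of `G` has a host tree
with fewer vertices. -/
def TreeRep.IsMinimal {V W : Type} [Fintype W] {G : SimpleGraph V} {T : SimpleGraph W}
    (_R : TreeRep G T) : Prop :=
  ∀ (W' : Type) [Fintype W'] (T' : SimpleGraph W'),
    Nonempty (TreeRep G T') → Fintype.card W ≤ Fintype.card W'

/-- The bag of a host tree vertex `x`. -/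
def TreeRep.bag {V W : Type} {G : SimpleGraph V} {T : SimpleGraph W}
    (R : TreeRep G T) (x : W) : Set V :=
  {u : V | x ∈ R.S u}

/-- In `T` rooted at `r`, the (vertex set of the) subtree rooted at `x`: all vertices `w`
such that the `r`–`w` path contains `x`. -/
def rootedSubtree {W : Type} (T : SimpleGraph W) (r x : W) : Set W :=
  {w : W | ∀ p : T.Walk r w, p.IsPath → x ∈ p.support}

/-- The core of a subgraph `H` of `G`: the union over edges `uv` of `H` of `V(S u ∩ S v)`,
a set of host-tree vertices. -/
def TreeRep.core {V W : Type} {G : SimpleGraph V} {T : SimpleGraph W}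
    (R : TreeRep G T) (H : G.Subgraph) : Set W :=
  {t : W | ∃ u v : V, H.Adj u v ∧ t ∈ R.S u ∧ t ∈ R.S v}

/-- `C` is a connected component of the subgraph of `T` induced on the vertex set `s`. -/
def IsCompOf {W : Type} (T : SimpleGraph W) (s C : Set W) : Prop :=
  C.Nonempty ∧ C ⊆ s ∧ (T.induce C).Connected ∧
    ∀ ⦃a b : W⦄, a ∈ C → b ∈ s → T.Adj a b → b ∈ C

/-- A graph is 2-connected if it has more than 2 vertices and deleting any one vertex
leaves it connected. -/
def TwoConnected {V : Type} (G : SimpleGraph V) : Prop :=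
  2 < Nat.card V ∧ ∀ v : V, (G.induce {v}ᶜ).Connected

/-- `G` is `k`-connected: more than `k` vertices, and deleting fewer than `k` vertices
leaves it connected. -/
def IsKConnectedGraph {V : Type} (G : SimpleGraph V) (k : ℕ) : Prop :=
  k < Nat.card V ∧ ∀ s : Set V, s.Finite → s.ncard < k → (G.induce sᶜ).Connected

/-- The vertex connectivity `κ(G)`: the maximum `k` such that `G` is `k`-connected. -/
noncomputable def vertexConnectivity {V : Type} (G : SimpleGraph V) : ℕ :=
  sSup {k : ℕ | IsKConnectedGraph G k}

/-- `p` is a path of maximum length in `G`. -/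
def IsLongestPath {V : Type} (G : SimpleGraph V) {a b : V} (p : G.Walk a b) : Prop :=
  p.IsPath ∧ ∀ (c d : V) (q : G.Walk c d), q.IsPath → q.length ≤ p.length

/-- `c` is a cycle of maximum length in `G`. -/
def IsLongestCycle {V : Type} (G : SimpleGraph V) {a : V} (c : G.Walk a a) : Prop :=
  c.IsCycle ∧ ∀ (d : V) (q : G.Walk d d), q.IsCycle → q.length ≤ c.length

/-- The longest path transversal number of `G`: the least size of a set of vertices
meeting every longest path. -/
noncomputable def lpt {V : Type} (G : SimpleGraph V) : ℕ :=
  sInf {k : ℕ | ∃ A : Set V, A.Finite ∧ A.ncard = k ∧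
    ∀ (a b : V) (p : G.Walk a b), IsLongestPath G p → ∃ v ∈ A, v ∈ p.support}

/-- The longest cycle transversal number of `G`: the least size of a set of vertices
meeting every longest cycle. -/
noncomputable def lct {V : Type} (G : SimpleGraph V) : ℕ :=
  sInf {k : ℕ | ∃ A : Set V, A.Finite ∧ A.ncard = k ∧
    ∀ (a : V) (c : G.Walk a a), IsLongestCycle G c → ∃ v ∈ A, v ∈ c.support}

/-- `DQX T q X Q0`: the union, over `y ∈ Q0`, of the component of `X − E(Q)` containing
`y` (all vertices joined to some `y ∈ Q0` by a walk inside `X` avoiding the edges of `q`). -/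
def DQX {W : Type} (T : SimpleGraph W) {x z : W} (q : T.Walk x z) (X : Set W)
    (Q0 : Set W) : Set W :=
  {w : W | ∃ y ∈ Q0, ∃ d : (T.deleteEdges {e : Sym2 W | e ∈ q.edges}).Walk y w,
    ∀ a ∈ d.support, a ∈ X}

/-- Cutter can force the Cutter–Chooser game from position `(X, x)` (a subtree `X` of the
host tree, rooted at `x`) to end within `t` rounds: Cutter picks `z ∈ X` and cuts along the
`x`–`z` path `Q` in `X`; either `X = Q` (game over), or for every component `X'` of
`X − V(Q)` (with its root `x'`, the vertex of `X'` adjacent to `Q`) that Chooser may pick,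
Cutter wins within `t - 1` further rounds. -/
def cutterWins {W : Type} (T : SimpleGraph W) : ℕ → Set W → W → Prop
  | 0, _, _ => False
  | t + 1, X, x =>
      ∃ z ∈ X, ∃ p : T.Walk x z, p.IsPath ∧ (∀ w ∈ p.support, w ∈ X) ∧
        (X = {w : W | w ∈ p.support} ∨
          ∀ (X' : Set W) (x' : W), IsCompOf T (X \ {w : W | w ∈ p.support}) X' →
            x' ∈ X' → (∃ u ∈ p.support, T.Adj u x') → cutterWins T t X' x')

/-- `ccg(X, x)`: the number of rounds of the Cutter–Chooser game on the subtree `X` of the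
host tree rooted at `x`, under optimal play. -/
noncomputable def ccgOn {W : Type} (T : SimpleGraph W) (X : Set W) (x : W) : ℕ :=
  sInf {t : ℕ | cutterWins T t X x}

/-- `ccg(T)`: the minimum over roots `r` of `ccg(T, r)`. -/
noncomputable def ccg {W : Type} (T : SimpleGraph W) : ℕ :=
  sInf (Set.range fun r : W => ccgOn T Set.univ r)

/-- A subdivided caterpillar: a tree having a (spine) path containing every vertex of
degree at least 3. -/
def IsSubdividedCaterpillar {W : Type} (T : SimpleGraph W) : Prop :=
  T.IsTree ∧ ∃ (a b : W) (q : T.Walk a b), q.IsPath ∧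
    ∀ v : W, 3 ≤ (T.neighborSet v).ncard → v ∈ q.support

/-- A subdivided star: a tree with at most one vertex of degree at least 3. -/
def IsSubdividedStar {W : Type} (T : SimpleGraph W) : Prop :=
  T.IsTree ∧ ∀ v w : W, 3 ≤ (T.neighborSet v).ncard → 3 ≤ (T.neighborSet w).ncard → v = w

/-- A leaf: a vertex of degree 1. -/
def IsLeaf {W : Type} (T : SimpleGraph W) (v : W) : Prop := (T.neighborSet v).ncard = 1

/-- `mf T`: the maximum over edges `e` of `T` of the minimum number of leaves of `T`
contained in a component of `T − e`. -/
noncomputable def mf {W : Type} (T : SimpleGraph W) : ℕ :=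
  sSup {k : ℕ | ∃ u v : W, T.Adj u v ∧
    k = min {w : W | IsLeaf T w ∧ (T.deleteEdges {s(u, v)}).Reachable u w}.ncard
            {w : W | IsLeaf T w ∧ (T.deleteEdges {s(u, v)}).Reachable v w}.ncard}

/-- In `T` rooted at `r`, `v` is a child of `u`. -/
def IsChildIn {W : Type} (T : SimpleGraph W) (r u v : W) : Prop :=
  T.Adj u v ∧ ∀ p : T.Walk r v, p.IsPath → u ∈ p.support

/-- In `T` rooted at `r`, `u` is childless. -/
def IsChildlessIn {W : Type} (T : SimpleGraph W) (r u : W) : Prop :=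
  ¬ ∃ v : W, IsChildIn T r u v


section helpers

variable {W : Type} {T : SimpleGraph W}

theorem tree_path_unique (hT : T.IsTree) {a b : W} (p p' : T.Walk a b) (hp : p.IsPath)
    (hp' : p'.IsPath) : p = p' := by
  have := hT.isAcyclic.path_unique ⟨p, hp⟩ ⟨p', hp'⟩
  exact congrArg Subtype.val this

/-- In a tree, any walk covers the support of the path with the same ends. -/
theorem tree_path_support_subset (hT : T.IsTree) {a b : W} (p p' : T.Walk a b)
    (hp : p.IsPath) : p.support ⊆ p'.support := by
  classical
  have := tree_path_unique hT p p'.bypass hp p'.bypass_isPath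
  rw [this]
  exact p'.support_bypass_subset

theorem tree_path_edges_subset (hT : T.IsTree) {a b : W} (p p' : T.Walk a b)
    (hp : p.IsPath) : p.edges ⊆ p'.edges := by
  classical
  have := tree_path_unique hT p p'.bypass hp p'.bypass_isPath
  rw [this]
  exact p'.edges_bypass_subset

theorem exists_walk_in {S : Set W} (hS : (T.induce S).Connected) {a b : W} (ha : a ∈ S)
    (hb : b ∈ S) : ∃ p : T.Walk a b, ∀ w ∈ p.support, w ∈ S := by
  obtain ⟨p⟩ := hS.preconnected ⟨a, ha⟩ ⟨b, hb⟩
  refine ⟨p.map (Embedding.induce S).toHom, ?_⟩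
  intro w hw
  have hw' := (Walk.support_map (Embedding.induce S).toHom p) ▸ hw
  obtain ⟨y, _, rfl⟩ := List.mem_map.1 hw'
  exact y.2

/-- Two vertices of a walk are joined by a walk using only edges of it. -/
theorem exists_walk_edges {x z : W} (q : T.Walk x z) {a b : W} (ha : a ∈ q.support)
    (hb : b ∈ q.support) : ∃ p : T.Walk a b, p.edges ⊆ q.edges := by
  classical
  refine ⟨(q.takeUntil a ha).reverse.append (q.takeUntil b hb), ?_⟩
  intro e he
  rw [Walk.edges_append, List.mem_append, Walk.edges_reverse, List.mem_reverse] at he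
  rcases he with he | he
  · exact q.edges_takeUntil_subset_edges ha he
  · exact q.edges_takeUntil_subset_edges hb he

theorem delete_reach_unique (hT : T.IsTree) {x z : W} (q : T.Walk x z) {a b : W}
    (ha : a ∈ q.support) (hb : b ∈ q.support)
    (h : (T.deleteEdges {e : Sym2 W | e ∈ q.edges}).Reachable a b) : a = b := by
  classical
  obtain ⟨d⟩ := h
  obtain ⟨p, hp⟩ := exists_walk_edges q ha hb
  have hle : T.deleteEdges {e : Sym2 W | e ∈ q.edges} ≤ T := deleteEdges_le _
  let d' := d.bypass.mapLe hle
  have hd' : d'.IsPath := d.bypass_isPath.mapLe hle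
  have hsub := tree_path_edges_subset hT d' p hd'
  have hnil : d'.edges = [] := by
    rw [List.eq_nil_iff_forall_not_mem]
    intro e he
    have h1 := hp (hsub he)
    have he2 : e ∈ d.bypass.edges := by
      simpa [d', Walk.edges_mapLe_eq_edges] using he
    have := Walk.edges_subset_edgeSet _ he2
    rw [edgeSet_deleteEdges] at this
    exact this.2 h1
  have : d'.length = 0 := by rw [← Walk.length_edges, hnil]; rfl
  exact Walk.eq_of_length_eq_zero this

theorem exists_index (hT : T.IsTree) {x z : W} (q : T.Walk x z) (hq : q.IsPath) :
    ∃ f : W → ℕ, (∀ t, f t ≤ q.length) ∧ (∀ i ≤ q.length, f (q.getVert i) = i) ∧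
      (∀ t, (T.deleteEdges {e : Sym2 W | e ∈ q.edges}).Reachable (q.getVert (f t)) t) ∧
      (∀ s t, (T.deleteEdges {e : Sym2 W | e ∈ q.edges}).Reachable s t → f s = f t) := by
  have hex : ∀ t, ∃ i ≤ q.length,
      (T.deleteEdges {e : Sym2 W | e ∈ q.edges}).Reachable (q.getVert i) t := by
    have key : ∀ (u t : W) (p : T.Walk u t), (∃ i ≤ q.length,
      (T.deleteEdges {e : Sym2 W | e ∈ q.edges}).Reachable (q.getVert i) u) →
      (∃ i ≤ q.length,
      (T.deleteEdges {e : Sym2 W | e ∈ q.edges}).Reachable (q.getVert i) t) := by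
      intro u t p
      induction p with
      | nil => exact id
      | @cons u v w h p ih =>
        rintro ⟨i, hi, hr⟩
        apply ih
        by_cases he : s(u, v) ∈ q.edges
        · have hv : v ∈ q.support := q.snd_mem_support_of_mem_edges he
          obtain ⟨j, hj, hjl⟩ := (Walk.mem_support_iff_exists_getVert).1 hv
          exact ⟨j, hjl, hj ▸ Reachable.refl _⟩
        · refine ⟨i, hi, hr.trans (Adj.reachable ?_)⟩
          rw [deleteEdges_adj]
          exact ⟨h, he⟩
    intro t
    obtain ⟨p⟩ := hT.connected.preconnected x t
    exact key x t p ⟨0, Nat.zero_le _, by simp⟩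
  choose f hf hr using hex
  have huniq : ∀ i ≤ q.length, ∀ t,
      (T.deleteEdges {e : Sym2 W | e ∈ q.edges}).Reachable (q.getVert i) t → f t = i := by
    intro i hi t h
    have := delete_reach_unique hT q (q.getVert_mem_support (f t)) (q.getVert_mem_support i)
      ((hr t).trans h.symm)
    exact hq.getVert_injOn (hf t) hi this
  exact ⟨f, hf, fun i hi => huniq i hi _ (Reachable.refl _), hr,
    fun s t h => (huniq (f s) (hf s) t ((hr s).trans h)).symm⟩

/-- Discrete intermediate value theorem. -/
theorem walk_ivt {x z : W} (q : T.Walk x z)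
    (f : W → ℕ) (hfq : ∀ i ≤ q.length, f (q.getVert i) = i)
    (hfr : ∀ s t, (T.deleteEdges {e : Sym2 W | e ∈ q.edges}).Reachable s t → f s = f t)
    {s t : W} (p : T.Walk s t) (c : ℕ) (hs : f s ≤ c) (ht : c < f t) :
    q.getVert c ∈ p.support ∧ q.getVert (c + 1) ∈ p.support := by
  induction p with
  | nil => omega
  | @cons u v w h p ih =>
    by_cases hv : f v ≤ c
    · have := ih hv ht
      simp [this.1, this.2]
    · have he : s(u, v) ∈ q.edges := by
        by_contra he
        have : f u = f v := hfr _ _ (Adj.reachable (by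
          rw [deleteEdges_adj]; exact ⟨h, he⟩))
        omega
      obtain ⟨n, hn, hen⟩ : ∃ n < q.length, s(q.getVert n, q.getVert (n + 1)) = s(u, v) := by
        rw [Walk.edges_eq_map_darts] at he
        obtain ⟨d, hd, hde⟩ := List.mem_map.1 he
        obtain ⟨n, hn, rfl⟩ := List.mem_iff_getElem.1 hd
        refine ⟨n, by simpa using hn, ?_⟩
        rw [← hde]
        simp [Walk.darts_getElem_eq_getVert]
      have h1 := hfq n hn.le
      have h2 := hfq (n + 1) hn
      rw [Sym2.eq_iff] at hen
      rcases hen with ⟨hu, hv'⟩ | ⟨hu, hv'⟩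
      · rw [hu] at h1
        rw [hv'] at h2
        have : n = c := by omega
        subst this
        rw [hu, hv']
        simp
      · rw [hu] at h1
        rw [hv'] at h2
        omega

theorem rooted_step {r x a b : W} (ha : a ∈ rootedSubtree T r x)
    (hax : a ≠ x) (hab : T.Adj a b) : b ∈ rootedSubtree T r x := by
  classical
  intro p hp
  by_cases h : a ∈ p.support
  · exact p.support_takeUntil_subset_support h (ha _ (hp.takeUntil h))
  · have := ha (p.concat hab.symm) (hp.concat h hab.symm)
    rw [Walk.support_concat] at this
    simp at this
    rcases this with h | h
    · exact h
    · exact absurd h.symm hax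

theorem rooted_walk {r x : W} {E : Set (Sym2 W)} {u v : W} (d : (T.deleteEdges E).Walk u v)
    (hu : u ∈ rootedSubtree T r x) (h : ∀ a ∈ d.support, a ≠ x) :
    ∀ a ∈ d.support, a ∈ rootedSubtree T r x := by
  induction d with
  | nil => intro a ha; simp at ha; exact ha ▸ hu
  | @cons u v w hadj d ih =>
    intro a ha
    rw [Walk.support_cons, List.mem_cons] at ha
    rcases ha with rfl | ha
    · exact hu
    · refine ih ?_ ?_ a ha
      · exact rooted_step hu (h u (by simp)) ((deleteEdges_le E) hadj)
      · intro a ha; exact h a (by simp [ha])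

/-- If the family is not captured by the path minus its first vertex. -/
theorem tail_miss {V : Type} {G : SimpleGraph V} (R : TreeRep G T) {ι : Type}
    (H : ι → G.Subgraph) {x z : W} (q : T.Walk x z) (X : Set W)
    {y₁ y₂ : W} (q₀ : T.Walk y₁ y₂) (hq₀ : q₀.IsPath)
    (hmin : ∀ (a b : W) (q' : T.Walk a b), q'.IsPath →
      (∀ w ∈ q'.support, w ∈ q₀.support) →
      (∀ i : ι, (R.core (H i) ∩ DQX T q X {w : W | w ∈ q'.support}).Nonempty) →
      {w : W | w ∈ q'.support} = {w : W | w ∈ q₀.support})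
    (hne : y₁ ≠ y₂) :
    ∃ i, ∀ t ∈ R.core (H i), t ∉ DQX T q X {w : W | w ∈ q₀.support ∧ w ≠ y₁} := by
  cases q₀ with
  | nil => exact absurd rfl hne
  | cons h p =>
    by_contra hcon
    push Not at hcon
    rw [Walk.cons_isPath_iff] at hq₀
    have hset : {w : W | w ∈ (Walk.cons h p).support ∧ w ≠ y₁} = {w | w ∈ p.support} := by
      ext w
      simp only [Walk.support_cons, List.mem_cons, Set.mem_setOf_eq]
      constructor
      · rintro ⟨h1 | h1, h2⟩
        · exact absurd h1 h2
        · exact h1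
      · intro hw
        exact ⟨Or.inr hw, fun h => hq₀.2 (h ▸ hw)⟩
    rw [hset] at hcon
    have := hmin _ _ p hq₀.1 (fun w hw => by simp [hw]) (fun i => by
      obtain ⟨t, h1, h2⟩ := hcon i
      exact ⟨t, h1, h2⟩)
    have hy : y₁ ∈ {w : W | w ∈ (Walk.cons h p).support} := by simp
    rw [← this] at hy
    exact hq₀.2 hy

theorem isK_of_le {V : Type} (G : SimpleGraph V) (k : ℕ) (hk : 0 < k)
    (h : k ≤ vertexConnectivity G) : IsKConnectedGraph G k := by
  have hbdd : BddAbove {k : ℕ | IsKConnectedGraph G k} := ⟨Nat.card V, fun m hm => hm.1.le⟩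
  have hne : {k : ℕ | IsKConnectedGraph G k}.Nonempty := by
    by_contra hcon
    rw [Set.not_nonempty_iff_eq_empty] at hcon
    unfold vertexConnectivity at h
    rw [hcon] at h
    simp at h
    omega
  have hmem : IsKConnectedGraph G (vertexConnectivity G) := Nat.sSup_mem hne hbdd
  exact ⟨lt_of_le_of_lt h hmem.1, fun s hs hc => hmem.2 s hs (lt_of_lt_of_le hc h)⟩

theorem spanlongpath_aux {V : Type} (G : SimpleGraph V) (R : TreeRep G T) (r : W)
    (x z : W) (q : T.Walk x z) 
    (hqX : ∀ w ∈ q.support, w ∈ rootedSubtree T r x)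
    {ι : Type} (H : ι → G.Subgraph) (k : ℕ) (hk0 : 0 < k)
    (hk : ∀ i j, k ≤ vertexConnectivity (H i ⊔ H j).coe)
    {y₁ y₂ : W} (q₀ : T.Walk y₁ y₂) (hq₀ : q₀.IsPath)
    (hsub : ∀ w ∈ q₀.support, w ∈ q.support)
    (hcap₀ : ∀ i : ι, (R.core (H i) ∩
      DQX T q (rootedSubtree T r x) {w : W | w ∈ q₀.support}).Nonempty)
    (f : W → ℕ) (hfl : ∀ t, f t ≤ q.length) (hfq : ∀ i ≤ q.length, f (q.getVert i) = i)
    (hfd : ∀ t, (T.deleteEdges {e : Sym2 W | e ∈ q.edges}).Reachable (q.getVert (f t)) t)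
    (hfr : ∀ s t, (T.deleteEdges {e : Sym2 W | e ∈ q.edges}).Reachable s t → f s = f t)
    (hlt : f y₁ < f y₂) (i j : ι)
    (hi : ∀ t ∈ R.core (H i),
      t ∉ DQX T q (rootedSubtree T r x) {w : W | w ∈ q₀.support ∧ w ≠ y₁})
    (hj : ∀ t ∈ R.core (H j),
      t ∉ DQX T q (rootedSubtree T r x) {w : W | w ∈ q₀.support ∧ w ≠ y₂}) :
    ∃ A : Set V, A.Finite ∧ A.ncard = k ∧ ∀ v ∈ A, ∀ w ∈ q₀.support, w ∈ R.S v := by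
  classical
  have hT := R.isTree
  have hfx : f x = 0 := by simpa using hfq 0 (Nat.zero_le _)
  have hgv : ∀ y ∈ q.support, q.getVert (f y) = y := by
    intro y hy
    obtain ⟨n, hn, hnl⟩ := (Walk.mem_support_iff_exists_getVert).1 hy
    rw [← hn, hfq n hnl]
  have hne : y₁ ≠ y₂ := fun h => by rw [h] at hlt; omega
  have hy1 := hgv y₁ (hsub _ q₀.start_mem_support)
  have hy2 := hgv y₂ (hsub _ q₀.end_mem_support)
  -- interior points lie in the relevant parts
  have hint : ∀ t, f y₁ < f t → f t < f y₂ → ∀ (y : W), y = y₁ ∨ y = y₂ →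
      t ∈ DQX T q (rootedSubtree T r x) {w : W | w ∈ q₀.support ∧ w ≠ y} := by
    intro t h1 h2 y hy
    have hmem := (walk_ivt q f hfq hfr q₀ (f t) h1.le h2).1
    have hft : f (q.getVert (f t)) = f t := hfq _ (hfl t)
    obtain ⟨d⟩ := hfd t
    refine ⟨q.getVert (f t), ⟨hmem, ?_⟩, d, ?_⟩
    · intro h
      rw [h] at hft
      rcases hy with rfl | rfl <;> omega
    · apply rooted_walk d (hqX _ (q.getVert_mem_support _))
      intro a ha hax
      have := hfr _ _ ⟨d.takeUntil a ha⟩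
      rw [hax, hfx, hft] at this
      omega
  have hend : ∀ y ∈ q₀.support, ∀ y' : W, y ≠ y' →
      y ∈ DQX T q (rootedSubtree T r x) {w : W | w ∈ q₀.support ∧ w ≠ y'} := by
    intro y hy y' hyy
    refine ⟨y, ⟨hy, hyy⟩, Walk.nil, ?_⟩
    intro a ha
    simp at ha
    exact ha ▸ hqX _ (hsub _ hy)
  -- points on both sides force membership
  have hboth : ∀ v s t, s ∈ R.S v → t ∈ R.S v → f s ≤ f y₁ → f y₂ ≤ f t →
      y₁ ∈ R.S v ∧ y₂ ∈ R.S v := by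
    intro v s t hs ht h1 h2
    obtain ⟨p, hp⟩ := exists_walk_in (R.subtree_connected v) hs ht
    constructor
    · have := (walk_ivt q f hfq hfr p (f y₁) h1 (by omega)).1
      rw [hy1] at this
      exact hp _ this
    · have := (walk_ivt q f hfq hfr p (f y₂ - 1) (by omega) (by omega)).2
      rw [Nat.sub_add_cancel (by omega), hy2] at this
      exact hp _ this
  -- starting points
  have hstart : ∀ (l : ι) (y : W), (∀ t ∈ R.core (H l),
      t ∉ DQX T q (rootedSubtree T r x) {w : W | w ∈ q₀.support ∧ w ≠ y}) →
      ∃ u v t, (H l).Adj u v ∧ t ∈ R.S u ∧ t ∈ R.S v ∧ f t = f y := by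
    intro l y hl
    obtain ⟨t, ht, y', hy', d, hd⟩ := hcap₀ l
    have hyy : y' = y := by
      by_contra hcon
      exact hl t ht ⟨y', ⟨hy', hcon⟩, d, hd⟩
    obtain ⟨u, v, huv, hu, hv⟩ := ht
    exact ⟨u, v, t, huv, hu, hv, by rw [← hyy]; exact (hfr _ _ ⟨d⟩).symm⟩
  obtain ⟨hcard, hconn⟩ := isK_of_le _ k hk0 (hk i j)
  haveI hfin : Finite (H i ⊔ H j).verts := Nat.finite_of_card_ne_zero (by omega)
  set K := H i ⊔ H j with hK
  let A : Set K.verts := {v | y₁ ∈ R.S v ∧ y₂ ∈ R.S v}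
  by_cases hA : k ≤ A.ncard
  · obtain ⟨B, hBA, hB⟩ := Set.exists_subset_card_eq hA
    refine ⟨Subtype.val '' B, (Set.toFinite B).image _, ?_, ?_⟩
    · rw [Set.ncard_image_of_injective _ Subtype.val_injective, hB]
    · rintro _ ⟨v, hv, rfl⟩ w hw
      obtain ⟨h1, h2⟩ := hBA hv
      obtain ⟨p, hp⟩ := exists_walk_in (R.subtree_connected v) h1 h2
      exact hp _ (tree_path_support_subset hT q₀ p hq₀ hw)
  · exfalso
    have hc := hconn A (Set.toFinite A) (by omega)
    -- a non-member near each end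
    have hpick : ∀ (l : ι) (y y' : W), (H l ≤ K) → (∀ t ∈ R.core (H l),
        t ∉ DQX T q (rootedSubtree T r x) {w : W | w ∈ q₀.support ∧ w ≠ y}) →
        y' ≠ y → (y' = y₁ ∨ y' = y₂) →
        ∃ u : K.verts, u ∉ A ∧ ∃ t ∈ R.S u, f t = f y := by
      intro l y y' hle hl hyy hy'
      obtain ⟨u, v, t, huv, hu, hv, hft⟩ := hstart l y hl
      have hKadj := hle.2 huv
      by_cases huA : (⟨u, K.edge_vert hKadj⟩ : K.verts) ∈ A
      · refine ⟨⟨v, K.edge_vert hKadj.symm⟩, ?_, t, hv, hft⟩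
        intro hvA
        have hmem : y' ∈ q₀.support := by
          rcases hy' with rfl | rfl
          · exact q₀.start_mem_support
          · exact q₀.end_mem_support
        refine hl y' ⟨u, v, huv, ?_, ?_⟩ (hend y' hmem y hyy)
        · rcases hy' with rfl | rfl
          · exact huA.1
          · exact huA.2
        · rcases hy' with rfl | rfl
          · exact hvA.1
          · exact hvA.2
      · exact ⟨_, huA, t, hu, hft⟩
    obtain ⟨u, huA, s, hsu, hs⟩ := hpick i y₁ y₂ le_sup_left hi hne.symm (Or.inr rfl)
    obtain ⟨u', huA', s', hsu', hs'⟩ := hpick j y₂ y₁ le_sup_right hj hne (Or.inl rfl)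
    have key : ∀ (a b : (Aᶜ : Set K.verts)) (p : (K.coe.induce Aᶜ).Walk a b),
        (∃ t ∈ R.S a.1.1, f t ≤ f y₁) → ∃ t ∈ R.S b.1.1, f t ≤ f y₁ := by
      intro a b p
      induction p with
      | nil => exact id
      | @cons a b c h p ih =>
        rintro ⟨t, ht, hft⟩
        apply ih
        have hadj : K.Adj a.1.1 b.1.1 := h
        have hG := K.adj_sub hadj
        obtain ⟨m, hma, hmb⟩ := (R.adj_iff _ _ hG.ne).1 hG
        refine ⟨m, hmb, ?_⟩
        by_contra hcon
        by_cases hm : f y₂ ≤ f m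
        · exact a.2 (hboth _ t m ht hma hft hm)
        · have hadj' : (H i).Adj a.1.1 b.1.1 ∨ (H j).Adj a.1.1 b.1.1 :=
            Subgraph.sup_adj.1 hadj
          rcases hadj' with hadj | hadj
          · exact hi m ⟨_, _, hadj, hma, hmb⟩ (hint m (by omega) (by omega) _ (Or.inl rfl))
          · exact hj m ⟨_, _, hadj, hma, hmb⟩ (hint m (by omega) (by omega) _ (Or.inr rfl))
    obtain ⟨p⟩ := hc.preconnected ⟨u, huA⟩ ⟨u', huA'⟩
    obtain ⟨t, ht, hft⟩ := key _ _ p ⟨s, hsu, hs.le⟩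
    exact huA' (hboth _ t s' ht hsu' hft hs'.ge)

end helpers

/-- Let `X` be the subtree of `T` rooted at `x`, `Q = q` a subpath of `X` with
endpoint `x`, `ℋ = H` a nonempty family of subgraphs for which `X` has the core capture
property, and `k` the minimum connectivity of unions of pairs from the family. If `Q₀ = q₀`
is a minimal subpath of `Q` such that `D_Q^X(Q₀)` has the core capture property for the
family, and `|V(Q₀)| ≥ 2`, then `G` has `k` vertices `v` with `Q₀ ⊆ S(v)`. -/
theorem spanlongpath {V W : Type} (G : SimpleGraph V) (T : SimpleGraph W)
    (hchordal : IsChordal G) (R : TreeRep G T) (r : W)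
    (x z : W) (hz : z ∈ rootedSubtree T r x)
    (q : T.Walk x z) (hq : q.IsPath) (hqX : ∀ w ∈ q.support, w ∈ rootedSubtree T r x)
    {ι : Type} [Nonempty ι] (H : ι → G.Subgraph)
    (hcap : ∀ i : ι, (R.core (H i) ∩ rootedSubtree T r x).Nonempty)
    (k : ℕ)
    (hk : k = sInf {m : ℕ | ∃ i j : ι, m = vertexConnectivity (H i ⊔ H j).coe})
    {y₁ y₂ : W} (q₀ : T.Walk y₁ y₂) (hq₀ : q₀.IsPath)
    (hsub : ∀ w ∈ q₀.support, w ∈ q.support)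
    (hcap₀ : ∀ i : ι, (R.core (H i) ∩
      DQX T q (rootedSubtree T r x) {w : W | w ∈ q₀.support}).Nonempty)
    (hmin : ∀ (a b : W) (q' : T.Walk a b), q'.IsPath →
      (∀ w ∈ q'.support, w ∈ q₀.support) →
      (∀ i : ι, (R.core (H i) ∩
        DQX T q (rootedSubtree T r x) {w : W | w ∈ q'.support}).Nonempty) →
      {w : W | w ∈ q'.support} = {w : W | w ∈ q₀.support})
    (hlen : 2 ≤ q₀.support.length) :
    ∃ A : Set V, A.Finite ∧ A.ncard = k ∧ ∀ v ∈ A, ∀ w ∈ q₀.support, w ∈ R.S v := by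
  rcases Nat.eq_zero_or_pos k with hk0 | hk0
  · exact ⟨∅, Set.finite_empty, by simp [hk0], by simp⟩
  have hk' : ∀ i j, k ≤ vertexConnectivity (H i ⊔ H j).coe := by
    intro i j
    rw [hk]
    exact Nat.sInf_le ⟨i, j, rfl⟩
  have hne : y₁ ≠ y₂ := by
    rintro rfl
    rw [Walk.isPath_iff_eq_nil] at hq₀
    subst hq₀
    simp at hlen
  obtain ⟨f, hfl, hfq, hfd, hfr⟩ := exists_index R.isTree q hq
  obtain ⟨i, hi⟩ := tail_miss R H q _ q₀ hq₀ hmin hne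
  obtain ⟨j, hj⟩ := tail_miss R H q (rootedSubtree T r x) q₀.reverse hq₀.reverse
    (by simpa using hmin) hne.symm
  have hj' : ∀ t ∈ R.core (H j),
      t ∉ DQX T q (rootedSubtree T r x) {w : W | w ∈ q₀.support ∧ w ≠ y₂} := by
    simpa using hj
  have hfne : f y₁ ≠ f y₂ := by
    intro h
    obtain ⟨n, hn, hnl⟩ := (Walk.mem_support_iff_exists_getVert).1 (hsub _ q₀.start_mem_support)
    obtain ⟨m, hm, hml⟩ := (Walk.mem_support_iff_exists_getVert).1 (hsub _ q₀.end_mem_support)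
    have h1 := hfq n hnl
    have h2 := hfq m hml
    rw [hn] at h1
    rw [hm] at h2
    apply hne
    rw [← hn, ← hm]
    congr 1
    omega
  rcases lt_or_gt_of_ne hfne with hlt | hlt
  · exact spanlongpath_aux G R r x z q hqX H k hk0 hk' q₀ hq₀ hsub hcap₀ f hfl hfq hfd hfr hlt
      i j hi hj'
  · have := spanlongpath_aux G R r x z q hqX H k hk0 hk' q₀.reverse hq₀.reverse
      (by simpa using hsub) (by simpa using hcap₀) f hfl hfq hfd hfr hlt
      j i hj (by simpa using hi)
    simpa using this
end

section
/- Let G be a graph, let W ⊆ V(G) be a pair of vertices, and let ℋ be a family of subgraphs of G, where each H ∈ ℋ is a longest path or a longest cycle of G with V(H) ∩ W = ∅. Call a vertex u an attachment point if u is adjacent to both vertices of W. Let ℛ be a nonempty family of paths in G such that each R ∈ ℛ is disjoint from W and the two endpoints of R are distinct attachment points. If each H ∈ ℋ contains a subpath belonging to ℛ, then each maximum-length path in ℛ intersects every H ∈ ℋ. -/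
open SimpleGraph

namespace TwoWay

variable {V : Type} {G : SimpleGraph V}

lemma path_index {a b : V} (p : G.Walk a b) (hp : p.IsPath) {x y : V} (r : G.Walk x y)
    (hr : r.toSubgraph ≤ p.toSubgraph) :
    ∀ i, i ≤ p.length → p.getVert i = x →
      ∃ k, k ≤ p.length ∧ p.getVert k = y ∧ k ≤ i + r.length ∧ i ≤ k + r.length := by
  induction r with
  | nil => intro i hi h; exact ⟨i, hi, h, by simp, by simp⟩
  | @cons u v w h r ih =>
    intro i hi hx
    have hadj : p.toSubgraph.Adj u v := hr.2 (by simp)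
    have hr' : r.toSubgraph ≤ p.toSubgraph := le_trans (by simp) hr
    obtain ⟨k, hk, hkl⟩ := p.toSubgraph_adj_iff.mp hadj
    have inj := hp.getVert_injOn
    have key : ∃ i', i' ≤ p.length ∧ p.getVert i' = v ∧ i' ≤ i + 1 ∧ i ≤ i' + 1 := by
      rcases Sym2.eq_iff.mp hk with ⟨h1, h2⟩ | ⟨h1, h2⟩
      · have : k = i := inj (show k ≤ p.length by omega) hi (h1.trans hx.symm)
        exact ⟨k + 1, by omega, h2, by omega, by omega⟩
      · have : k + 1 = i := inj (show k + 1 ≤ p.length by omega) hi (h2.trans hx.symm)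
        exact ⟨k, by omega, h1, by omega, by omega⟩
    obtain ⟨i', a1, a2, a3, a4⟩ := key
    obtain ⟨k', b1, b2, b3, b4⟩ := ih hr' i' a1 a2
    exact ⟨k', b1, b2, by simp only [Walk.length_cons]; omega, by simp only [Walk.length_cons]; omega⟩

lemma cycle_inj {a : V} (c : G.Walk a a) (hc : c.IsCycle) {i k : ℕ} (hi : i ≤ c.length)
    (hk : k ≤ c.length) (h : c.getVert i = c.getVert k) :
    i = k ∨ (i = 0 ∧ k = c.length) ∨ (i = c.length ∧ k = 0) := by
  by_cases hi0 : i = 0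
  · subst hi0
    have := (hc.getVert_endpoint_iff hk).mp (by rw [← h]; simp)
    omega
  by_cases hk0 : k = 0
  · subst hk0
    have := (hc.getVert_endpoint_iff hi).mp (by rw [h]; simp)
    omega
  · exact Or.inl (hc.getVert_injOn (show 1 ≤ i ∧ i ≤ c.length by omega)
      (show 1 ≤ k ∧ k ≤ c.length by omega) h)

lemma cycle_index {a : V} (c : G.Walk a a) (hc : c.IsCycle) {x y : V} (r : G.Walk x y)
    (hr : r.toSubgraph ≤ c.toSubgraph) :
    ∀ i, i ≤ c.length → c.getVert i = x →
      ∃ k, k ≤ c.length ∧ c.getVert k = y ∧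
        ((k ≤ i + r.length ∧ i ≤ k + r.length) ∨ c.length + i ≤ k + r.length ∨
          c.length + k ≤ i + r.length) := by
  induction r with
  | nil => intro i hi h; exact ⟨i, hi, h, by simp⟩
  | @cons u v w h r ih =>
    intro i hi hx
    have hadj : c.toSubgraph.Adj u v := hr.2 (by simp)
    have hr' : r.toSubgraph ≤ c.toSubgraph := le_trans (by simp) hr
    obtain ⟨k, hk, hkl⟩ := c.toSubgraph_adj_iff.mp hadj
    have key : ∃ i', i' ≤ c.length ∧ c.getVert i' = v ∧ ((i' ≤ i + 1 ∧ i ≤ i' + 1) ∨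
        c.length + i ≤ i' + 1 ∨ c.length + i' ≤ i + 1) := by
      rcases Sym2.eq_iff.mp hk with ⟨h1, h2⟩ | ⟨h1, h2⟩
      · have := cycle_inj c hc (show k ≤ c.length by omega) hi (h1.trans hx.symm)
        exact ⟨k + 1, by omega, h2, by omega⟩
      · have := cycle_inj c hc (show k + 1 ≤ c.length by omega) hi (h2.trans hx.symm)
        exact ⟨k, by omega, h1, by omega⟩
    obtain ⟨i', a1, a2, a3⟩ := key
    obtain ⟨k', b1, b2, b3⟩ := ih hr' i' a1 a2
    exact ⟨k', b1, b2, by simp only [Walk.length_cons]; omega⟩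

lemma isPath_join {a x s t y b : V} {q₁ : G.Walk a x} {m : G.Walk s t} {q₂ : G.Walk y b}
    (h₁ : q₁.IsPath) (hm : m.IsPath) (h₂ : q₂.IsPath) (hxs : G.Adj x s) (hty : G.Adj t y)
    (d1 : ∀ v ∈ q₁.support, v ∉ m.support) (d2 : ∀ v ∈ q₂.support, v ∉ m.support)
    (d3 : ∀ v ∈ q₁.support, v ∉ q₂.support) :
    (q₁.append (Walk.cons hxs (m.append (Walk.cons hty q₂)))).IsPath := by
  rw [Walk.isPath_def] at *
  simp only [Walk.support_append, Walk.support_cons, List.tail_cons, List.nodup_append]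
  refine ⟨h₁, ⟨hm, h₂, ?_⟩, ?_⟩
  · rintro u hu v hv rfl; exact d2 _ hv hu
  · rintro u hu v hv rfl
    rcases List.mem_append.mp hv with h | h
    · exact d1 _ hu h
    · exact d3 _ hu h

lemma isPath_join' {s t y b : V} {m : G.Walk s t} {q₂ : G.Walk y b}
    (hm : m.IsPath) (h₂ : q₂.IsPath) (hty : G.Adj t y)
    (d2 : ∀ v ∈ q₂.support, v ∉ m.support) :
    (m.append (Walk.cons hty q₂)).IsPath := by
  rw [Walk.isPath_def] at *
  simp only [Walk.support_append, Walk.support_cons, List.tail_cons, List.nodup_append]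
  refine ⟨hm, h₂, ?_⟩
  rintro u hu v hv rfl; exact d2 _ hv hu

/-- The path case. -/
lemma path_case {a b s t : V} (p : G.Walk a b) (hp : IsLongestPath G p) (m : G.Walk s t)
    (hm : m.IsPath) (hd : ∀ v ∈ p.support, v ∉ m.support) (i j : ℕ) (hij : i < j)
    (hj : j ≤ p.length) (hs : G.Adj (p.getVert i) s) (ht : G.Adj t (p.getVert j)) :
    m.length + 2 ≤ j - i := by
  have hP := isPath_join (hp.1.take i) hm (hp.1.drop j) hs ht
    (fun v hv => hd v ((p.isSubwalk_take i).support_subset hv))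
    (fun v hv => hd v ((p.isSubwalk_drop j).support_subset hv))
    (by
      intro v h1 h2
      obtain ⟨n1, e1, l1⟩ := Walk.mem_support_iff_exists_getVert.mp h1
      obtain ⟨n2, e2, l2⟩ := Walk.mem_support_iff_exists_getVert.mp h2
      rw [Walk.take_getVert] at e1
      rw [Walk.drop_getVert] at e2
      rw [Walk.take_length] at l1
      rw [Walk.drop_length] at l2
      have := hp.1.getVert_injOn (show _ ≤ p.length by omega) (show _ ≤ p.length by omega)
        (e1.trans e2.symm)
      omega)
  have := hp.2 _ _ _ hP
  simp only [Walk.length_append, Walk.length_cons, Walk.take_length, Walk.drop_length] at this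
  omega

/-- The cycle case. -/
lemma cycle_case {a x y s t : V} (c : G.Walk a a) (hc : IsLongestCycle G c) (m : G.Walk s t)
    (hm : m.IsPath) (hst : s ≠ t) (hd : ∀ v ∈ c.support, v ∉ m.support)
    (q : G.Walk y x) (hq : q.IsPath) (hqc : ∀ v ∈ q.support, v ∈ c.support)
    (hs : G.Adj x s) (ht : G.Adj t y) :
    m.length + 2 + q.length ≤ c.length := by
  have hP := isPath_join' hm hq ht (fun v hv => hd v (hqc v hv))
  have hC : (Walk.cons hs (m.append (Walk.cons ht q))).IsCycle := by
    rw [Walk.cons_isCycle_iff]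
    refine ⟨hP, fun h => ?_⟩
    rw [Walk.edges_append, Walk.edges_cons, List.mem_append, List.mem_cons] at h
    rcases h with h | h | h
    · exact hd x (hqc x q.end_mem_support) (m.fst_mem_support_of_mem_edges h)
    · rcases Sym2.eq_iff.mp h with ⟨h1, h2⟩ | ⟨h1, h2⟩
      · exact hd x (hqc x q.end_mem_support) (h1 ▸ m.end_mem_support)
      · exact hst h2
    · exact hd s (hqc s (q.snd_mem_support_of_mem_edges h)) m.start_mem_support
  have := hc.2 _ _ hC
  simp only [Walk.length_append, Walk.length_cons] at this
  omega

end TwoWay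

/-- Let `W = {w₁, w₂}` be a pair of glue vertices and `ℋ = H` a family of
longest paths/longest cycles avoiding `W`. Let `ℛ` be a nonempty family of paths disjoint
from `W` whose endpoints are distinct attachment points (vertices adjacent to both `w₁`
and `w₂`). If each member of `ℋ` contains a subpath in `ℛ`, then each maximum-length
path of `ℛ` intersects every member of `ℋ`. -/
theorem general_two_way {V : Type} (G : SimpleGraph V) (w₁ w₂ : V) (hw : w₁ ≠ w₂)
    {ι : Type} (H : ι → G.Subgraph)
    (hH : ∀ i : ι,
      (∃ (a b : V) (p : G.Walk a b), IsLongestPath G p ∧ H i = p.toSubgraph) ∨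
      (∃ (a : V) (c : G.Walk a a), IsLongestCycle G c ∧ H i = c.toSubgraph))
    (hHW : ∀ i : ι, w₁ ∉ (H i).verts ∧ w₂ ∉ (H i).verts)
    {ρ : Type} [Nonempty ρ] (Ra Rb : ρ → V) (Rw : ∀ j : ρ, G.Walk (Ra j) (Rb j))
    (hRpath : ∀ j : ρ, (Rw j).IsPath)
    (hRW : ∀ j : ρ, w₁ ∉ (Rw j).support ∧ w₂ ∉ (Rw j).support)
    (hRatt : ∀ j : ρ, Ra j ≠ Rb j ∧ G.Adj (Ra j) w₁ ∧ G.Adj (Ra j) w₂ ∧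
      G.Adj (Rb j) w₁ ∧ G.Adj (Rb j) w₂)
    (hsub : ∀ i : ι, ∃ j : ρ, (Rw j).toSubgraph ≤ H i) :
    ∀ j : ρ, (∀ j' : ρ, (Rw j').length ≤ (Rw j).length) →
      ∀ i : ι, ∃ v : V, v ∈ (Rw j).support ∧ v ∈ (H i).verts := by
  classical
  intro j hmax i
  by_contra hno
  push Not at hno
  obtain ⟨j', hj'⟩ := hsub i
  have hlen := hmax j'
  obtain ⟨hne, A1, A2, B1, B2⟩ := hRatt j'
  obtain ⟨_, C1, _, _, D2⟩ := hRatt j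
  obtain ⟨hw1, hw2⟩ := hRW j
  obtain ⟨m, hm, hml, hms⟩ : ∃ m : G.Walk w₁ w₂, m.IsPath ∧ m.length = (Rw j).length + 2 ∧
      ∀ v ∈ m.support, v = w₁ ∨ v = w₂ ∨ v ∈ (Rw j).support := by
    refine ⟨Walk.cons C1.symm ((Rw j).concat D2), ?_, by simp, ?_⟩
    · rw [Walk.cons_isPath_iff, Walk.concat_isPath_iff]
      refine ⟨⟨hRpath j, hw2⟩, ?_⟩
      simp [Walk.support_concat, hw1, hw]
    · intro v hv
      simp [Walk.support_concat] at hv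
      tauto
  have hd : ∀ v ∈ (H i).verts, v ∉ m.support := by
    intro v hv hvm
    rcases hms v hvm with rfl | rfl | h
    · exact (hHW i).1 hv
    · exact (hHW i).2 hv
    · exact hno v h hv
  have hx : Ra j' ∈ (H i).verts := hj'.1 (Walk.start_mem_verts_toSubgraph _)
  rcases hH i with ⟨a, b, p, hp, he⟩ | ⟨a, c₀, hc₀, he⟩
  · rw [he] at hj' hd hx
    simp only [Walk.mem_verts_toSubgraph] at hd hx
    obtain ⟨n, e, l⟩ := Walk.mem_support_iff_exists_getVert.mp hx
    obtain ⟨k, k1, k2, k3, k4⟩ := TwoWay.path_index p hp.1 _ hj' n l e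
    rcases lt_trichotomy n k with h | h | h
    · have := TwoWay.path_case p hp m hm hd n k h k1 (e ▸ A1) (k2 ▸ B2.symm)
      omega
    · subst h
      exact hne (e.symm.trans k2)
    · have := TwoWay.path_case p hp m hm hd k n h l (k2 ▸ B1) (e ▸ A2.symm)
      omega
  · rw [he] at hj' hd hx
    simp only [Walk.mem_verts_toSubgraph] at hd hx
    obtain ⟨c, hc, hcs, hcg⟩ : ∃ c : G.Walk (Ra j') (Ra j'), IsLongestCycle G c ∧
        (∀ v, v ∈ c.support ↔ v ∈ c₀.support) ∧ c.toSubgraph = c₀.toSubgraph := by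
      have hg := Walk.toSubgraph_rotate c₀ hx
      refine ⟨c₀.rotate _ hx, ⟨hc₀.1.rotate hx, fun d q hq => ?_⟩, fun v => ?_, hg⟩
      · simpa using hc₀.2 d q hq
      · rw [← Walk.mem_verts_toSubgraph, hg, Walk.mem_verts_toSubgraph]
    rw [← hcg] at hj'
    have hd' : ∀ v ∈ c.support, v ∉ m.support := fun v hv => hd v ((hcs v).mp hv)
    obtain ⟨k, k1, k2, k3⟩ := TwoWay.cycle_index c hc.1 _ hj' 0 (by omega) (by simp)
    have hk0 : 0 < k := by
      rcases Nat.eq_zero_or_pos k with h | h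
      · subst h; exact absurd (by simpa using k2) hne
      · exact h
    have hkn : k < c.length := by
      rcases Nat.lt_or_ge k c.length with h | h
      · exact h
      · rw [Walk.getVert_of_length_le _ h] at k2; exact absurd k2 hne
    have L1 := TwoWay.cycle_case c hc m hm hw hd' (c.drop k) (hc.1.isPath_drop hk0)
      (fun v hv => (c.isSubwalk_drop k).support_subset hv) A1 (k2 ▸ B2.symm)
    have L2 := TwoWay.cycle_case c hc m hm hw hd' (c.take k).reverse (hc.1.isPath_take hkn).reverse
      (fun v hv => (c.isSubwalk_take k).support_subset (by simpa using hv)) A1 (k2 ▸ B2.symm)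
    simp only [Walk.drop_length, Walk.length_reverse, Walk.take_length] at L1 L2
    omega
end

section
/- Let G be a 2-connected chordal graph with a minimal rooted tree representation T. Let X be a subtree of T rooted at x, let z ∈ V(X), and let Q be the x–z path in X. Let 𝒞 be a family of longest cycles of G such that X has the core capture property for 𝒞. Then there is a set A ⊆ V(G) with |A| ≤ 4 such that the family 𝒞′ of cycles in 𝒞 that are disjoint from A is either empty, or there is a component X′ of X − V(Q) such that X′ has the core capture property for 𝒞′. -/
open SimpleGraph

/-- `Ch r a l b`: the sequence `a, l, b` is a chain for `r`. -/
def Ch {V : Type} (r : V → V → Prop) : V → List V → V → Prop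
  | a, [], b => r a b
  | a, x :: l, b => r a x ∧ Ch r x l b

/-- cyclic list representation of a cycle. -/
def Cyc {V : Type} (r : V → V → Prop) (a : V) (l : List V) : Prop :=
  (a :: l).Nodup ∧ 2 ≤ l.length ∧ Ch r a l a

set_option linter.unusedSimpArgs false
section lists
variable {V : Type} {r : V → V → Prop}

@[simp] theorem ch_nil {a b : V} : Ch r a [] b ↔ r a b := Iff.rfl
@[simp] theorem ch_cons {a b x : V} {l : List V} : Ch r a (x :: l) b ↔ r a x ∧ Ch r x l b := Iff.rfl
@[simp] theorem ch_append {a b x : V} {l m : List V} :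
    Ch r a (l ++ x :: m) b ↔ Ch r a l x ∧ Ch r x m b := by
  induction l generalizing a with
  | nil => simp
  | cons y l ih => simp [ih, and_assoc]

theorem Ch.mono {r' : V → V → Prop} (h : ∀ a b, r a b → r' a b) {a b : V} {l : List V} :
    Ch r a l b → Ch r' a l b := by
  induction l generalizing a with
  | nil => exact h _ _
  | cons y l ih => exact fun k => ⟨h _ _ k.1, ih k.2⟩

theorem Ch.rev (hs : ∀ a b, r a b → r b a) {a b : V} {l : List V} :
    Ch r a l b → Ch r b l.reverse a := by
  induction l generalizing a with
  | nil => exact hs _ _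
  | cons y l ih =>
    intro k
    simp only [List.reverse_cons, ch_append, ch_nil]
    exact ⟨ih k.2, hs _ _ k.1⟩

theorem Cyc.rot {a b : V} {s t : List V} (h : Cyc r a (s ++ b :: t)) : Cyc r b (t ++ a :: s) := by
  obtain ⟨h1, h2, h3⟩ := h
  refine ⟨?_, ?_, ?_⟩
  · simp only [List.nodup_cons, List.nodup_append, List.mem_append, List.mem_cons] at h1 ⊢
    grind
  · simp at h2 ⊢; omega
  · simp at h3 ⊢; exact h3.symm

theorem Cyc.rev (hs : ∀ a b, r a b → r b a) {a : V} {l : List V} (h : Cyc r a l) :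
    Cyc r a l.reverse := by
  obtain ⟨h1, h2, h3⟩ := h
  exact ⟨by simpa using h1, by simpa using h2, h3.rev hs⟩

theorem Cyc.mono {r' : V → V → Prop} (h : ∀ a b, r a b → r' a b) {a : V} {l : List V}
    (k : Cyc r a l) : Cyc r' a l := ⟨k.1, k.2.1, k.2.2.mono h⟩

theorem exists_first {p : V → Prop} {l : List V} (h : ∃ x ∈ l, p x) :
    ∃ s x t, l = s ++ x :: t ∧ p x ∧ ∀ y ∈ s, ¬ p y := by
  induction l with
  | nil => simp at h
  | cons y l ih =>
    by_cases hy : p y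
    · exact ⟨[], y, l, rfl, hy, by simp⟩
    · obtain ⟨s, x, t, rfl, h1, h2⟩ := ih (by grind)
      exact ⟨y :: s, x, t, rfl, h1, by grind⟩

theorem exists_last {p : V → Prop} {l : List V} (h : ∃ x ∈ l, p x) :
    ∃ s x t, l = s ++ x :: t ∧ p x ∧ ∀ y ∈ t, ¬ p y := by
  obtain ⟨s, x, t, h1, h2, h3⟩ := exists_first (l := l.reverse) (p := p) (by simpa using h)
  refine ⟨t.reverse, x, s.reverse, ?_, h2, by simpa using h3⟩
  have := congrArg List.reverse h1
  simpa using this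

/-- rotate a cyclic list to start at any member. -/
theorem Cyc.start {a x : V} {l : List V} (h : Cyc r a l) (hx : x ∈ a :: l) :
    ∃ m, Cyc r x m ∧ m.length = l.length ∧ ∀ y, y ∈ x :: m ↔ y ∈ a :: l := by
  rcases List.mem_cons.1 hx with rfl | hx
  · exact ⟨l, h, rfl, fun _ => Iff.rfl⟩
  · obtain ⟨s, t, rfl⟩ := List.append_of_mem hx
    exact ⟨t ++ a :: s, h.rot, by simp; omega, by simp; grind⟩

theorem Cyc.arc (hs : ∀ a b, r a b → r b a) {a x y : V} {l : List V} (h : Cyc r a l)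
    (hx : x ∈ a :: l) (hy : y ∈ a :: l) (hxy : x ≠ y) :
    ∃ α, Ch r x α y ∧ (x :: y :: α).Nodup ∧ (∀ u ∈ α, u ∈ a :: l) ∧
      l.length + 1 ≤ 2 * α.length + 2 := by
  obtain ⟨m, h1, h2, h3⟩ := h.start hx
  have hy' : y ∈ m := by have := (h3 y).2 hy; simp [hxy.symm] at this; exact this
  obtain ⟨α, β, rfl⟩ := List.append_of_mem hy'
  obtain ⟨k1, k2, k3⟩ := h1
  simp only [ch_append] at k3
  simp only [List.length_append, List.length_cons] at h2
  by_cases hl : β.length ≤ α.length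
  · refine ⟨α, k3.1, ?_, ?_, by omega⟩
    · simp only [List.nodup_cons, List.nodup_append, List.mem_append, List.mem_cons] at k1 ⊢
      grind
    · intro u hu; rw [← h3]; simp [hu]
  · refine ⟨β.reverse, k3.2.rev hs, ?_, ?_, by simp; omega⟩
    · simp only [List.nodup_cons, List.nodup_append, List.mem_append, List.mem_cons,
        List.mem_reverse, List.nodup_reverse] at k1 ⊢
      grind
    · intro u hu; rw [← h3]; simp at hu; simp [hu]

end lists

section graph
variable {V : Type} {G : SimpleGraph V}

theorem walk_ch {r : V → V → Prop} {u v : V} (p : G.Walk u v)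
    (hr : ∀ a b, s(a, b) ∈ p.edges → r a b) (hp : p.length ≠ 0) :
    ∃ l, p.support = u :: (l ++ [v]) ∧ Ch r u l v := by
  induction p with
  | nil => simp at hp
  | @cons u v w h p ih =>
    cases p with
    | nil => exact ⟨[], by simp, hr _ _ (by simp)⟩
    | cons h' p' =>
      obtain ⟨l, h1, h2⟩ := ih (fun a b hab => hr a b (by rw [Walk.edges_cons]; exact List.mem_cons_of_mem _ hab)) (by simp)
      exact ⟨v :: l, by rw [Walk.support_cons, h1]; simp, hr _ _ (by simp), h2⟩

theorem hit (h2 : TwoConnected G) {v u : V} (huv : u ≠ v) (P : V → Prop) (hu : ¬ P u)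
    (hP : ∃ h, P h ∧ h ≠ v) :
    ∃ l h, Ch G.Adj u l h ∧ (u :: l).Nodup ∧ (∀ y ∈ l, ¬ P y) ∧ v ∉ l ∧ P h ∧ h ≠ v := by
  classical
  obtain ⟨h0, hh, hv⟩ := hP
  obtain ⟨p⟩ := (h2.2 v).preconnected ⟨u, huv⟩ ⟨h0, hv⟩
  let q : G.Walk u h0 := (p.bypass).map (Embedding.induce {v}ᶜ).toHom
  have hq : q.IsPath := Walk.map_isPath_of_injective Subtype.val_injective p.bypass_isPath
  have hqv : v ∉ q.support := by
    intro hm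
    have e : q.support = p.bypass.support.map (Embedding.induce {v}ᶜ).toHom := Walk.support_map _ _
    rw [e, List.mem_map] at hm
    obtain ⟨⟨y, hy⟩, -, h⟩ := hm
    exact hy h
  have hne : u ≠ h0 := fun h => hu (h ▸ hh)
  obtain ⟨l, h1, h2⟩ := walk_ch q (r := G.Adj) (fun a b h => Walk.adj_of_mem_edges q h) (by
    intro h; exact hne (Walk.eq_of_length_eq_zero h))
  obtain ⟨s, x, t, e, k1, k2⟩ := exists_first (l := l ++ [h0]) (p := P) ⟨h0, by simp, hh⟩
  have hnd : (u :: (s ++ x :: t)).Nodup := by rw [← e, ← h1]; exact hq.support_nodup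
  have hvs : v ∉ u :: (s ++ x :: t) := by rw [← e, ← h1]; exact hqv
  have hch : Ch G.Adj u s x := by
    rcases List.eq_nil_or_concat t with rfl | ⟨t', z, rfl⟩
    · obtain ⟨rfl, h⟩ := List.append_inj' e rfl
      simp at h; exact h ▸ h2
    · have : l = s ++ x :: t' := by
        have : l ++ [h0] = (s ++ x :: t') ++ [z] := by simpa using e
        exact (List.append_inj' this rfl).1
      subst this
      exact (ch_append.1 h2).1
  refine ⟨s, x, hch, ?_, k2, ?_, k1, ?_⟩
  · simp only [List.nodup_cons, List.nodup_append, List.mem_append, List.mem_cons] at hnd ⊢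
    grind
  · grind
  · grind

/-- an ear of `A` through `v` -/
def Ear (G : SimpleGraph V) (A : V → Prop) (v : V) : Prop :=
  ∃ a1 s t a2, a1 ≠ a2 ∧ A a1 ∧ A a2 ∧ (∀ y ∈ s, ¬ A y) ∧ (∀ y ∈ t, ¬ A y) ∧
    (s ++ v :: t).Nodup ∧ Ch G.Adj a1 s v ∧ Ch G.Adj v t a2

theorem adj_symm' (a b : V) : G.Adj a b → G.Adj b a := fun h => h.symm

theorem ear_step (h2 : TwoConnected G) {A : V → Prop} {x v : V} (hx : Ear G A x) (hxA : ¬ A x)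
    (hv : ¬ A v) (hvx : G.Adj v x) : Ear G A v := by
  obtain ⟨a1, s, t, a2, h12, hA1, hA2, hs, ht, hnd, c1, c2⟩ := hx
  have hne : v ≠ x := hvx.ne
  have hxv := hvx.symm
  by_cases hvs : v ∈ s
  · obtain ⟨s1, s2, rfl⟩ := List.append_of_mem hvs
    refine ⟨a1, s1, s2 ++ x :: t, a2, h12, hA1, hA2, by grind, by grind, by simpa using hnd, ?_⟩
    simp at c1 ⊢; tauto
  by_cases hvt : v ∈ t
  · obtain ⟨t1, t2, rfl⟩ := List.append_of_mem hvt
    refine ⟨a1, s ++ x :: t1, t2, a2, h12, hA1, hA2, by grind, by grind, by simpa using hnd, ?_⟩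
    simp at c2 ⊢; tauto
  obtain ⟨l, h, k1, k2, k3, k4, k5, k6⟩ := hit h2 hne (fun y => A y ∨ y ∈ s ∨ y ∈ t) (by tauto)
    ⟨a1, Or.inl hA1, fun e => hxA (e ▸ hA1)⟩
  have k1r := k1.rev adj_symm'
  simp only [List.nodup_cons, List.nodup_append, List.mem_append, List.mem_cons] at hnd k2
  rcases k5 with k5 | k5 | k5
  · by_cases hh : h = a2
    · subst hh
      refine ⟨a1, s ++ [x], l, h, h12, hA1, hA2, by grind, by grind, ?_, ?_⟩
      · simp only [List.nodup_cons, List.nodup_append, List.mem_append, List.mem_cons]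
        grind
      · simp; tauto
    · refine ⟨h, l.reverse, x :: t, a2, hh, k5, hA2, by grind, by grind, ?_, ?_⟩
      · simp only [List.nodup_cons, List.nodup_append, List.mem_append, List.mem_cons, List.nodup_reverse, List.mem_reverse]
        grind
      · simp; tauto
  · obtain ⟨s1, s2, rfl⟩ := List.append_of_mem k5
    refine ⟨a1, s1 ++ h :: l.reverse, x :: t, a2, h12, hA1, hA2, by grind, by grind, ?_, ?_⟩
    · simp only [List.nodup_cons, List.nodup_append, List.mem_append, List.mem_cons, List.nodup_reverse, List.mem_reverse] at hnd ⊢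
      grind
    · simp at c1 ⊢; tauto
  · obtain ⟨t1, t2, rfl⟩ := List.append_of_mem k5
    refine ⟨a1, s ++ [x], l ++ h :: t2, a2, h12, hA1, hA2, by grind, by grind, ?_, ?_⟩
    · simp only [List.nodup_cons, List.nodup_append, List.mem_append, List.mem_cons, List.nodup_reverse, List.mem_reverse] at hnd ⊢
      grind
    · simp at c2 ⊢; tauto

theorem ear_ex (h2 : TwoConnected G) {A : V → Prop} (hA : ∀ a, ∃ b, A b ∧ b ≠ a) {v : V}
    (hv : ¬ A v) : Ear G A v := by
  have key : ∀ (l : List V) (v h : V), ¬ A v → A h → (∀ y ∈ l, ¬ A y) → Ch G.Adj v l h → Ear G A v := by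
    intro l
    induction l with
    | nil =>
      intro v h hv hh _ hadj
      obtain ⟨l, k, k1, k2, k3, k4, k5, k6⟩ := hit h2 (v := h) (u := v) (fun e => hv (e ▸ hh)) A hv (hA h)
      exact ⟨h, [], l, k, k6.symm, hh, k5, by simp, k3, by simpa using k2, hadj.symm, k1⟩
    | cons x l ih =>
      intro v h hv hh hl hc
      exact ear_step h2 (ih x h (hl x (by simp)) hh (fun y hy => hl y (by simp [hy])) hc.2)
        (hl x (by simp)) hv hc.1
  obtain ⟨a, ha, -⟩ := hA v
  obtain ⟨l, k, k1, k2, k3, k4, k5, k6⟩ := hit h2 (v := a) (u := v) (fun e => hv (e ▸ ha)) A hv (hA a)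
  exact key l v k hv k5 k3 k1

theorem two_paths (h2 : TwoConnected G) {A B : V → Prop} (hA : ∀ a, ∃ b, A b ∧ b ≠ a)
    (hB : ∀ a, ∃ b, B b ∧ b ≠ a) (hAB : ∀ v, A v → ¬ B v) (v0 : V) :
    ∃ a1 r1 b1 a2 r2 b2, A a1 ∧ A a2 ∧ a1 ≠ a2 ∧ B b1 ∧ B b2 ∧ b1 ≠ b2 ∧
      Ch G.Adj a1 r1 b1 ∧ Ch G.Adj a2 r2 b2 ∧ (r1 ++ r2).Nodup ∧
      (∀ y ∈ r1, ¬ A y ∧ ¬ B y) ∧ (∀ y ∈ r2, ¬ A y ∧ ¬ B y) := by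
  obtain ⟨b, hb, -⟩ := hB v0
  obtain ⟨a1, s, t, a2, h12, hA1, hA2, hs, ht, hnd, c1, c2⟩ := ear_ex h2 hA (fun h => hAB b h hb)
  obtain ⟨p1, b1, rest, e, hb1, hp1⟩ := exists_first (l := s ++ b :: t) (p := B) ⟨b, by simp, hb⟩
  have hLA : ∀ y ∈ p1 ++ b1 :: rest, ¬ A y := by
    rw [← e]; intro y hy; simp at hy
    rcases hy with hy | rfl | hy
    · exact hs y hy
    · exact fun h => hAB y h hb
    · exact ht y hy
  have hch : Ch G.Adj a1 (p1 ++ b1 :: rest) a2 := by rw [← e]; simp; tauto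
  rw [e] at hnd
  clear e c1 c2 hs ht hb s t b
  simp only [ch_append] at hch
  obtain ⟨c1, c2⟩ := hch
  by_cases hr : ∃ y ∈ rest, B y
  · obtain ⟨m, b2, p2, rfl, hb2, hp2⟩ := exists_last hr
    simp only [ch_append] at c2
    simp only [List.nodup_cons, List.nodup_append, List.mem_append, List.mem_cons] at hnd
    refine ⟨a1, p1, b1, a2, p2.reverse, b2, hA1, hA2, h12, hb1, hb2, by grind, c1, c2.2.rev adj_symm', ?_, ?_, ?_⟩
    · simp only [List.nodup_append, List.mem_reverse, List.nodup_reverse]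
      grind
    · grind
    · grind
  · push Not at hr
    obtain ⟨b', hb', hne⟩ := hB b1
    obtain ⟨l, h, k1, k2, k3, k4, k5, k6⟩ := hit h2 hne (fun y => A y ∨ y ∈ p1 ∨ y ∈ rest) (by
        have := hAB b'; grind)
      ⟨a1, Or.inl hA1, fun e => hAB _ (e ▸ hA1) hb1⟩
    obtain ⟨l1, b2, l2, e, hb2, hl2⟩ := exists_last (l := b' :: l) (p := B) ⟨b', by simp, hb'⟩
    have c3 : Ch G.Adj b2 l2 h := by
      cases l1 with
      | nil => simp at e; obtain ⟨rfl, rfl⟩ := e; exact k1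
      | cons y l1 => simp at e; obtain ⟨rfl, rfl⟩ := e; simp at k1; exact k1.2
    have hb21 : b2 ≠ b1 := by grind
    have hl2' : ∀ y ∈ l2, y ∉ p1 ∧ y ∉ rest ∧ ¬ A y ∧ ¬ B y := by
      intro y hy
      have : y ∈ b' :: l := by rw [e]; simp [hy]
      have h3 := hl2 y hy
      have h4 : y ∈ l := by
        rcases List.mem_cons.1 this with rfl | h
        · exact absurd hb' h3
        · exact h
      have := k3 y h4; tauto
    have hl2n : l2.Nodup := by
      rw [e] at k2
      simp only [List.nodup_cons, List.nodup_append] at k2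
      exact k2.2.1.2
    have c3r := c3.rev adj_symm'
    simp only [List.nodup_cons, List.nodup_append, List.mem_append, List.mem_cons] at hnd
    rcases k5 with k5 | k5 | k5
    · by_cases hh : h = a1
      · refine ⟨a2, rest.reverse, b1, h, l2.reverse, b2, hA2, k5, by grind, hb1, hb2, hb21.symm, c2.rev adj_symm', c3r, ?_, by grind, by grind⟩
        simp only [List.nodup_append, List.mem_reverse, List.nodup_reverse]
        grind
      · refine ⟨a1, p1, b1, h, l2.reverse, b2, hA1, k5, by grind, hb1, hb2, hb21.symm, c1, c3r, ?_, by grind, by grind⟩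
        simp only [List.nodup_append, List.mem_reverse, List.nodup_reverse]
        grind
    · obtain ⟨q1, q2, rfl⟩ := List.append_of_mem k5
      simp only [ch_append] at c1
      refine ⟨a1, q1 ++ h :: l2.reverse, b2, a2, rest.reverse, b1, hA1, hA2, h12, hb2, hb1, hb21, by simp; tauto, c2.rev adj_symm', ?_, by grind, by grind⟩
      simp only [List.nodup_cons, List.nodup_append, List.mem_append, List.mem_cons, List.nodup_reverse, List.mem_reverse] at hnd ⊢
      grind
    · obtain ⟨q1, q2, rfl⟩ := List.append_of_mem k5
      simp only [ch_append] at c2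
      refine ⟨a1, p1, b1, a2, q2.reverse ++ h :: l2.reverse, b2, hA1, hA2, h12, hb1, hb2, hb21.symm, c1, ?_, ?_, by grind, by grind⟩
      · simp only [ch_append]; exact ⟨c2.2.rev adj_symm', c3r⟩
      simp only [List.nodup_cons, List.nodup_append, List.mem_append, List.mem_cons, List.nodup_reverse, List.mem_reverse] at hnd ⊢
      grind

theorem Cyc.other {r : V → V → Prop} {a : V} {l : List V} (h : Cyc r a l) (u : V) :
    ∃ b, b ∈ a :: l ∧ b ≠ u := by
  obtain ⟨h1, h2, h3⟩ := h
  match l, h2 with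
  | x :: l, _ =>
    by_cases e : a = u
    · exact ⟨x, by simp, by simp at h1; grind⟩
    · exact ⟨a, by simp, e⟩

theorem two_common (h2 : TwoConnected G) {n : ℕ}
    (hmax : ∀ a l, Cyc G.Adj a l → l.length + 1 ≤ n) {a b : V} {l m : List V}
    (hc : Cyc G.Adj a l) (hl : l.length + 1 = n) (hd : Cyc G.Adj b m) (hm : m.length + 1 = n)
    (w : V) : ∃ s, s ∈ a :: l ∧ s ∈ b :: m ∧ s ≠ w := by
  by_contra hcon
  push Not at hcon
  have hn3 : 3 ≤ n := by have := hc.2.1; omega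
  by_cases hdis : ∃ s, s ∈ a :: l ∧ s ∈ b :: m
  · obtain ⟨s, hs1, hs2⟩ := hdis
    obtain rfl := hcon s hs1 hs2
    obtain ⟨b0, hb0, hb0s⟩ := hd.other s
    obtain ⟨a0, ha0, ha0s⟩ := hc.other s
    obtain ⟨p, h, k1, k2, k3, k4, k5, k6⟩ := hit h2 hb0s (fun y => y ∈ a :: l ∧ y ≠ s) (fun h => h.2 (hcon _ h.1 hb0))
      ⟨a0, ⟨ha0, ha0s⟩, ha0s⟩
    obtain ⟨l1, b2, l2, e, hb2, hl2⟩ := exists_last (l := b0 :: p) (p := fun y => y ∈ b :: m) ⟨b0, by simp, hb0⟩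
    have c3 : Ch G.Adj b2 l2 h := by
      cases l1 with
      | nil => simp at e; obtain ⟨rfl, rfl⟩ := e; exact k1
      | cons y l1 => simp at e; obtain ⟨rfl, rfl⟩ := e; simp at k1; exact k1.2
    have hb2s : b2 ≠ s := by grind
    have hl2' : ∀ y ∈ l2, y ∉ a :: l ∧ y ∉ b :: m := by
      intro y hy
      have : y ∈ b0 :: p := by rw [e]; simp [hy]
      have h3 := hl2 y hy
      have h4 : y ∈ p := by
        rcases List.mem_cons.1 this with rfl | h
        · exact absurd hb0 h3
        · exact h
      have := k3 y h4
      have : y ≠ s := fun e => k4 (e ▸ h4)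
      tauto
    have hl2n : l2.Nodup := by
      rw [e] at k2
      simp only [List.nodup_cons, List.nodup_append] at k2
      exact k2.2.1.2
    obtain ⟨α, A1, A2, A3, A4⟩ := hc.arc adj_symm' hs1 k5.1 k6.symm
    obtain ⟨γ, B1, B2, B3, B4⟩ := hd.arc adj_symm' hb2 hs2 hb2s
    have hh := k5.1
    have := hmax s (α ++ h :: (l2.reverse ++ b2 :: γ)) ⟨?_, ?_, ?_⟩
    · simp at this; omega
    · simp only [List.nodup_cons, List.nodup_append, List.mem_append, List.mem_cons, List.nodup_reverse, List.mem_reverse] at A2 B2 A3 B3 hl2' hh hb2 hcon hs1 hs2 ⊢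
      clear A1 B1 k1 k2 k3 e c3 hc hd hmax h2
      and_intros <;> grind
    · simp; omega
    · simp only [ch_append]; exact ⟨A1, c3.rev adj_symm', B1⟩
  · push Not at hdis
    obtain ⟨a1, r1, b1, a2, r2, b2, hA1, hA2, h12, hB1, hB2, hb12, c1, c2, hnd, hr1, hr2⟩ :=
      two_paths h2 (A := fun y => y ∈ a :: l) (B := fun y => y ∈ b :: m) hc.other hd.other hdis a
    obtain ⟨α, A1, A2, A3, A4⟩ := hc.arc adj_symm' hA1 hA2 h12
    obtain ⟨γ, B1, B2, B3, B4⟩ := hd.arc adj_symm' hB2 hB1 hb12.symm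
    have := hmax a1 (α ++ a2 :: (r2 ++ b2 :: (γ ++ b1 :: r1.reverse))) ⟨?_, ?_, ?_⟩
    · simp at this; omega
    · simp only [List.nodup_cons, List.nodup_append, List.mem_append, List.mem_cons, List.nodup_reverse, List.mem_reverse] at A2 B2 A3 B3 hA1 hA2 hB1 hB2 hnd hr1 hr2 hdis ⊢
      clear A1 B1 hc hd hmax h2 c1 c2 hcon
      and_intros <;> grind
    · simp; omega
    · simp only [ch_append]; exact ⟨A1, c2, B1, c1.rev adj_symm'⟩

end graph


/-- abstract interface to a longest cycle with edge relation `E` and vertex set `P`. -/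
structure LC {V : Type} (G : SimpleGraph V) (n : ℕ) (E : V → V → Prop) (P : V → Prop) : Prop where
  symm : ∀ a b, E a b → E b a
  adj : ∀ a b, E a b → G.Adj a b
  edge : ∀ u v, E u v → ∃ m, Cyc E u (v :: m) ∧ m.length + 2 = n ∧ ∀ y, y ∈ u :: v :: m ↔ P y

section conv
variable {V : Type} {G : SimpleGraph V}

theorem cyc_of_walk {a : V} (c : G.Walk a a) (hc : c.IsCycle) :
    ∃ l, Cyc c.toSubgraph.Adj a l ∧ c.support = a :: (l ++ [a]) ∧ l.length + 1 = c.length := by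
  have h3 := hc.three_le_length
  obtain ⟨l, h1, h2⟩ := walk_ch c (r := c.toSubgraph.Adj)
    (fun u v h => by rwa [Walk.adj_toSubgraph_iff_mem_edges]) (by omega)
  have hl : l.length + 1 = c.length := by
    have := c.length_support
    rw [h1] at this; simp at this; omega
  refine ⟨l, ⟨?_, by omega, h2⟩, h1, hl⟩
  have := hc.support_nodup
  rw [h1] at this
  simp only [List.tail_cons] at this
  have := this.perm (List.perm_append_singleton a l)
  exact this

theorem walk_of_ch {x b : V} {l : List V} (h : Ch G.Adj x l b) :
    ∃ p : G.Walk x b, p.support = x :: (l ++ [b]) := by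
  induction l generalizing x with
  | nil => exact ⟨Walk.cons (ch_nil.1 h) Walk.nil, rfl⟩
  | cons y l ih =>
    obtain ⟨p, hp⟩ := ih h.2
    exact ⟨Walk.cons h.1 p, by simp [hp]⟩

theorem walk_of_cyc {a : V} {l : List V} (h : Cyc G.Adj a l) :
    ∃ c : G.Walk a a, c.IsCycle ∧ c.length = l.length + 1 := by
  obtain ⟨h1, h2, h3⟩ := h
  match l, h2, h1, h3 with
  | y :: y' :: l, _, h1, h3 =>
    simp only [ch_cons] at h3
    obtain ⟨p, hp⟩ := walk_of_ch h3.2.2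
    simp only [List.nodup_cons, List.mem_cons] at h1
    have hps : (Walk.cons h3.2.1 p).support = y :: y' :: (l ++ [a]) := by simp [hp]
    refine ⟨Walk.cons h3.1 (Walk.cons h3.2.1 p), ?_, ?_⟩
    · rw [Walk.cons_isCycle_iff]
      constructor
      · rw [Walk.isPath_def, hps]
        simp only [List.nodup_cons, List.mem_cons, List.nodup_append, List.mem_append]
        grind
      · rw [Walk.edges_cons, List.mem_cons]
        rintro (h | h)
        · simp at h; grind
        · have := Walk.snd_mem_support_of_mem_edges _ h
          rw [hp] at this
          simp at this; grind
    · have := (Walk.cons h3.1 (Walk.cons h3.2.1 p)).length_support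
      rw [Walk.support_cons, hps] at this
      simp at this ⊢; omega

theorem Cyc.adjEdge {E : V → V → Prop} (hs : ∀ a b, E a b → E b a)
    (h2 : ∀ u, {v | E u v}.ncard ≤ 2) (hfin : ∀ u, {v | E u v}.Finite)
    {u v : V} {m : List V} (h : Cyc E u m) (huv : E u v) :
    ∃ m', Cyc E u (v :: m') ∧ m'.length + 1 = m.length ∧ ∀ y, y ∈ u :: v :: m' ↔ y ∈ u :: m := by
  obtain ⟨k1, k2, k3⟩ := id h
  match m, k2 with
  | y :: m, k2 =>
    rcases List.eq_nil_or_concat m with rfl | ⟨m, z, rfl⟩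
    · simp at k2
    · simp only [List.concat_eq_append] at h k1 k2 k3 ⊢
      simp only [ch_cons, ch_append, ch_nil] at k3
      simp only [List.nodup_cons, List.mem_cons, List.nodup_append, List.mem_append] at k1
      have hyz : y ≠ z := by grind
      have hsub : ({y, z} : Set V) ⊆ {v | E u v} := by
        rintro w (rfl | rfl)
        · exact k3.1
        · exact hs _ _ k3.2.2
      have heq : ({y, z} : Set V) = {v | E u v} :=
        Set.eq_of_subset_of_ncard_le hsub (by rw [Set.ncard_pair hyz]; exact h2 u) (hfin u)
      have hv : v ∈ ({y, z} : Set V) := by rw [heq]; exact huv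
      rcases hv with rfl | rfl
      · exact ⟨m ++ [z], h, by simp, by simp⟩
      · refine ⟨m.reverse ++ [y], ?_, by simp, by simp; grind⟩
        have := h.rev hs
        simpa using this

theorem lc_of_walk [Finite V] {a : V} (c : G.Walk a a) (hc : c.IsCycle) :
    LC G c.length c.toSubgraph.Adj (fun y => y ∈ c.support) := by
  have hs : ∀ a b, c.toSubgraph.Adj a b → c.toSubgraph.Adj b a := fun _ _ h => h.symm
  refine ⟨hs, fun _ _ h => h.adj_sub, fun u v huv => ?_⟩
  obtain ⟨l, h1, h2, h3⟩ := cyc_of_walk c hc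
  have hmem : ∀ y, y ∈ c.support ↔ y ∈ a :: l := by intro y; rw [h2]; simp; tauto
  have hu : u ∈ c.support := by
    rw [← Walk.mem_verts_toSubgraph]; exact huv.fst_mem
  obtain ⟨m, k1, k2, k3⟩ := h1.start ((hmem u).1 hu)
  have hdeg : ∀ u, {v | c.toSubgraph.Adj u v}.ncard ≤ 2 := by
    intro u
    by_cases hu : u ∈ c.support
    · exact (hc.ncard_neighborSet_toSubgraph_eq_two hu).le
    · have : {v | c.toSubgraph.Adj u v} = ∅ := by
        ext v
        simp only [Set.mem_setOf_eq, Set.mem_empty_iff_false, iff_false]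
        intro h
        exact hu (by rw [← Walk.mem_verts_toSubgraph]; exact h.fst_mem)
      rw [this]; simp
  obtain ⟨m', k4, k5, k6⟩ := k1.adjEdge hs hdeg (fun _ => Set.toFinite _) huv
  exact ⟨m', k4, by omega, fun y => by rw [k6, k3, hmem]⟩

end conv


section tree
variable {W : Type} {T : SimpleGraph W}

theorem conn_walk {S : Set W} (hS : (T.induce S).Connected) {t t' : W} (ht : t ∈ S) (ht' : t' ∈ S) :
    ∃ w : T.Walk t t', ∀ u ∈ w.support, u ∈ S := by
  obtain ⟨p⟩ := hS.preconnected ⟨t, ht⟩ ⟨t', ht'⟩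
  let w : T.Walk t t' := p.map (Embedding.induce S).toHom
  refine ⟨w, ?_⟩
  intro u hu
  have e : w.support = p.support.map (Embedding.induce S).toHom :=
    Walk.support_map _ _
  rw [e, List.mem_map] at hu
  obtain ⟨⟨y, hy⟩, -, rfl⟩ := hu
  exact hy

theorem rs_walk {a y t : W} (h : t ∈ rootedSubtree T a y) (w : T.Walk a t) : y ∈ w.support := by
  classical
  exact w.support_bypass_subset_support (h w.bypass w.bypass_isPath)

theorem tree_unique (hT : T.IsTree) {a b : W} {p p' : T.Walk a b} (h : p.IsPath) (h' : p'.IsPath) :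
    p = p' := (hT.existsUnique_path a b).unique h h'

theorem rs_of_path (hT : T.IsTree) {a y t : W} {p : T.Walk a t} (hp : p.IsPath)
    (hy : y ∈ p.support) : t ∈ rootedSubtree T a y := by
  intro p' hp'
  rwa [tree_unique hT hp' hp]

theorem sep1 {S : Set W} (hS : (T.induce S).Connected) {a y t t' : W} (ht : t ∈ S) (ht' : t' ∈ S)
    (h : t ∉ rootedSubtree T a y) (h' : t' ∈ rootedSubtree T a y) : y ∈ S := by
  simp only [rootedSubtree, Set.mem_ofPred_eq, not_forall] at h
  obtain ⟨p, -, hp⟩ := h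
  obtain ⟨w, hw⟩ := conn_walk hS ht ht'
  have := rs_walk h' (p.append w)
  rw [Walk.mem_support_append_iff] at this
  exact hw _ (this.resolve_left hp)

theorem convex (hT : T.IsTree) {S : Set W} (hS : (T.induce S).Connected) {t t' u : W} (ht : t ∈ S)
    (ht' : t' ∈ S) {p : T.Walk t t'} (hp : p.IsPath) (hu : u ∈ p.support) : u ∈ S := by
  classical
  obtain ⟨w, hw⟩ := conn_walk hS ht ht'
  rw [tree_unique hT hp w.bypass_isPath] at hu
  exact hw _ (w.support_bypass_subset_support hu)

theorem rs_trans (hT : T.IsTree) {a y y' t : W} (h1 : y' ∈ rootedSubtree T a y)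
    (h2 : t ∈ rootedSubtree T a y') : t ∈ rootedSubtree T a y := by
  classical
  intro p hp
  have := h2 p hp
  exact p.support_takeUntil_subset_support this (h1 _ (hp.takeUntil this))

variable {x z : W} (q : T.Walk x z)

open Classical in
/-- projection index on the path `q` -/
noncomputable def pr (t : W) : ℕ :=
  Nat.findGreatest (fun k => t ∈ rootedSubtree T x (q.getVert k)) q.length

theorem rs_zero (t : W) : t ∈ rootedSubtree T x (q.getVert 0) := by
  intro p _
  simp

theorem pr_le (t : W) : pr q t ≤ q.length := by
  classical
  exact Nat.findGreatest_le _

variable {q}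

theorem getVert_rs (hT : T.IsTree) (hq : q.IsPath) {i j : ℕ} (hij : i ≤ j) (hj : j ≤ q.length) :
    q.getVert j ∈ rootedSubtree T x (q.getVert i) := by
  apply rs_of_path hT (p := q.take j) (hq.take j)
  have : (q.take j).getVert i = q.getVert i := by
    rw [Walk.take_getVert]; congr 1; omega
  rw [← this]
  exact Walk.getVert_mem_support _ _

theorem not_getVert_rs (hq : q.IsPath) {i j : ℕ} (hij : i < j) (hj : j ≤ q.length) :
    q.getVert i ∉ rootedSubtree T x (q.getVert j) := by
  intro h
  have := h (q.take i) (hq.take i)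
  rw [Walk.mem_support_iff_exists_getVert] at this
  obtain ⟨k, h1, -⟩ := this
  rw [Walk.take_getVert] at h1
  have := hq.getVert_injOn (by simp; omega) (by simpa using hj) h1
  omega

theorem le_pr_iff (hT : T.IsTree) (hq : q.IsPath) {k : ℕ} (hk : k ≤ q.length) {t : W} :
    k ≤ pr q t ↔ t ∈ rootedSubtree T x (q.getVert k) := by
  classical
  constructor
  · intro h
    have h2 : t ∈ rootedSubtree T x (q.getVert (pr q t)) :=
      Nat.findGreatest_spec (P := fun k => t ∈ rootedSubtree T x (q.getVert k)) (Nat.zero_le _)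
        (rs_zero q t)
    exact rs_trans hT (getVert_rs hT hq h (pr_le q t)) h2
  · intro h
    exact Nat.le_findGreatest hk h

theorem pr_getVert (hT : T.IsTree) (hq : q.IsPath) {k : ℕ} (hk : k ≤ q.length) :
    pr q (q.getVert k) = k := by
  apply le_antisymm
  · by_contra h
    push Not at h
    have h1 := (le_pr_iff hT hq (pr_le q (q.getVert k))).1 le_rfl
    exact not_getVert_rs hq h (pr_le _ _) h1
  · exact (le_pr_iff hT hq hk).2 (getVert_rs hT hq le_rfl hk)

theorem T2 (hT : T.IsTree) (hq : q.IsPath) {S : Set W} (hS : (T.induce S).Connected) {t t' : W}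
    (ht : t ∈ S) (ht' : t' ∈ S) {i j : ℕ} (h1 : pr q t ≤ i) (h2 : i < j) (h3 : j ≤ pr q t') :
    q.getVert i ∈ S ∧ q.getVert j ∈ S := by
  classical
  have hm := pr_le q t'
  have key : ∀ k, pr q t < k → k ≤ pr q t' → q.getVert k ∈ S := by
    intro k hk hk'
    refine sep1 hS (a := x) ht ht' ?_ ((le_pr_iff hT hq (by omega)).1 hk')
    rw [← le_pr_iff hT hq (by omega)]; omega
  refine ⟨?_, key j (by omega) h3⟩
  rcases h1.lt_or_eq with h1 | h1
  · exact key i h1 (by omega)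
  · have hi1 := key (i + 1) (by omega) (by omega)
    have hti := (le_pr_iff hT hq (k := i) (by omega) (t := t)).1 (by omega)
    have hti1 : t ∉ rootedSubtree T x (q.getVert (i+1)) := by
      rw [← le_pr_iff hT hq (by omega)]; omega
    simp only [rootedSubtree, Set.mem_ofPred_eq, not_forall] at hti1
    obtain ⟨p, hp, hpn⟩ := hti1
    have hmem := hti p hp
    have hadj : T.Adj (q.getVert (i+1)) (q.getVert i) := (q.adj_getVert_succ (by omega)).symm
    have hpath : (Walk.cons hadj (p.dropUntil _ hmem)).IsPath := by
      rw [Walk.cons_isPath_iff]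
      exact ⟨hp.dropUntil _, fun h => hpn (p.support_dropUntil_subset_support hmem h)⟩
    exact convex hT hS hi1 ht hpath (by simp)

theorem T0 (hT : T.IsTree) {r : W}
    (hqX : ∀ w ∈ q.support, w ∈ rootedSubtree T r x) (hq : q.IsPath) {t : W}
    (ht : t ∉ rootedSubtree T r x) : pr q t = 0 := by
  classical
  by_contra h
  have h1 := (le_pr_iff hT hq (pr_le q t)).1 le_rfl
  simp only [rootedSubtree, Set.mem_ofPred_eq, not_forall] at ht
  obtain ⟨p, hp, hpn⟩ := ht
  obtain ⟨d, hd⟩ := (hT.existsUnique_path x t).exists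
  have hmem := h1 d hd
  have hk := hqX _ (q.getVert_mem_support (pr q t))
  have := rs_walk hk (p.append (d.dropUntil _ hmem).reverse)
  rw [Walk.mem_support_append_iff, Walk.support_reverse, List.mem_reverse] at this
  have hx := this.resolve_left hpn
  have hne : q.getVert (pr q t) ≠ x := by
    intro e
    have := pr_getVert hT hq (pr_le q t)
    have h0 := pr_getVert hT hq (Nat.zero_le q.length)
    rw [Walk.getVert_zero] at h0
    rw [e] at this; omega
  have hdrop := hd.dropUntil hmem
  have hspec := d.take_spec hmem
  have hnd := hd.support_nodup
  rw [← hspec, Walk.support_append] at hnd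
  have hx2 : x ∈ (d.dropUntil _ hmem).support.tail := by
    rw [Walk.mem_support_iff] at hx
    exact hx.resolve_left (fun e => hne e.symm)
  exact (List.nodup_append.1 hnd).2.2 x (Walk.start_mem_support _) x hx2 rfl

theorem T1 (hT : T.IsTree) {r : W}
    (hqX : ∀ w ∈ q.support, w ∈ rootedSubtree T r x) (hq : q.IsPath) {t : W}
    (ht : t ∈ rootedSubtree T r x) (htq : t ∉ q.support) :
    ∃ X', IsCompOf T (rootedSubtree T r x \ {w : W | w ∈ q.support}) X' ∧ t ∈ X' ∧
      ∀ S : Set W, (T.induce S).Connected → (∃ e ∈ S, e ∈ X') → (∃ f ∈ S, f ∉ X') →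
        q.getVert (pr q t) ∈ S := by
  classical
  set D := rootedSubtree T r x \ {w : W | w ∈ q.support} with hD
  let X' : Set W := {s | ∃ w : T.Walk t s, ∀ u ∈ w.support, u ∈ D}
  have htD : t ∈ D := ⟨ht, htq⟩
  have htX : t ∈ X' := ⟨Walk.nil, by simpa using htD⟩
  have hsub : X' ⊆ D := fun s ⟨w, hw⟩ => hw _ w.end_mem_support
  have hclosed : ∀ ⦃a b : W⦄, a ∈ X' → b ∈ D → T.Adj a b → b ∈ X' := by
    rintro a b ⟨w, hw⟩ hb hab
    refine ⟨w.append (Walk.cons hab Walk.nil), ?_⟩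
    intro u hu
    rw [Walk.mem_support_append_iff] at hu
    rcases hu with hu | hu
    · exact hw u hu
    · simp at hu
      rcases hu with rfl | rfl
      · exact hw _ w.end_mem_support
      · exact hb
  have hconn : (T.induce X').Connected := by
    rw [connected_iff_exists_forall_reachable]
    refine ⟨⟨t, htX⟩, ?_⟩
    rintro ⟨s, w, hw⟩
    have hsup : ∀ u ∈ w.support, u ∈ X' := fun u hu =>
      ⟨w.takeUntil u hu, fun v hv => hw v (w.support_takeUntil_subset_support hu hv)⟩
    exact ⟨w.induce X' hsup⟩
  refine ⟨X', ⟨⟨t, htX⟩, hsub, hconn, hclosed⟩, htX, ?_⟩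
  rintro S hS ⟨e, he, heX⟩ ⟨f, hf, hfX⟩
  obtain ⟨w, hw⟩ := conn_walk hS he hf
  obtain ⟨d, hd, h1, h2⟩ := w.exists_boundary_dart X' heX hfX
  obtain ⟨⟨e', f'⟩, hadj⟩ := d
  simp only at h1 h2 hadj
  have he' : e' ∈ S := hw _ (w.dart_fst_mem_support_of_mem_darts hd)
  have hf' : f' ∈ S := hw _ (w.dart_snd_mem_support_of_mem_darts hd)
  have hYX : ∀ k, q.getVert k ∉ X' := fun k hk => (hsub hk).2 (q.getVert_mem_support k)
  by_cases hfx : f' ∈ rootedSubtree T r x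
  · have hfq : f' ∈ q.support := by
      by_contra h
      exact h2 (hclosed h1 ⟨hfx, h⟩ hadj)
    obtain ⟨l, rfl, hl⟩ := Walk.mem_support_iff_exists_getVert.1 hfq
    have hpair : (T.induce ({e', q.getVert l} : Set W)).Connected := induce_pair_connected_of_adj hadj
    have hmem : ∀ k ≤ q.length, q.getVert k ∈ ({e', q.getVert l} : Set W) → k = l := by
      rintro k hk (h | h)
      · exact absurd (h ▸ h1) (hYX k)
      · have e1 := pr_getVert hT hq hk
        have e2 := pr_getVert hT hq hl
        rw [h] at e1; omega
    have hprl := pr_getVert hT hq hl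
    have hpe : pr q e' = l := by
      rcases lt_trichotomy (pr q e') l with h | h | h
      · exact hmem _ (pr_le _ _) (T2 hT hq hpair (t := e') (t' := q.getVert l) (by simp) (by simp) le_rfl h hprl.ge).1
      · exact h
      · exact hmem _ (pr_le _ _) (T2 hT hq hpair (t' := e') (t := q.getVert l) (by simp) (by simp) hprl.le h le_rfl).2
    have hpt : pr q t = pr q e' := by
      rcases lt_trichotomy (pr q t) (pr q e') with h | h | h
      · exact absurd (T2 hT hq hconn htX h1 le_rfl h le_rfl).1 (hYX _)
      · exact h
      · exact absurd (T2 hT hq hconn h1 htX le_rfl h le_rfl).1 (hYX _)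
    rw [hpt, hpe]; exact hf'
  · exfalso
    simp only [rootedSubtree, Set.mem_ofPred_eq, not_forall] at hfx
    obtain ⟨p, hp, hpn⟩ := hfx
    have := rs_walk (hsub h1).1 (p.append (Walk.cons hadj.symm Walk.nil))
    rw [Walk.mem_support_append_iff] at this
    have := this.resolve_left hpn
    simp at this
    rcases this with rfl | rfl
    · exact hpn p.end_mem_support
    · exact (hsub h1).2 q.start_mem_support
end tree


section main
variable {V W : Type} {G : SimpleGraph V} {T : SimpleGraph W}

theorem ch_last {r : V → V → Prop} {u a : V} {l : List V} (h : Ch r u l a) :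
    ∃ y ∈ u :: l, r y a := by
  induction l generalizing u with
  | nil => exact ⟨u, by simp, h⟩
  | cons x l ih =>
    obtain ⟨y, hy, h'⟩ := ih h.2
    exact ⟨y, by simp at hy ⊢; tauto, h'⟩

theorem ch_first {r : V → V → Prop} {b u : V} {l : List V} (h : Ch r b l u) :
    ∃ y ∈ l ++ [u], r b y := by
  cases l with
  | nil => exact ⟨u, by simp, h⟩
  | cons x l => exact ⟨x, by simp, h.1⟩

theorem ch_prop {r : V → V → Prop} {F : V → Prop} {a b : V} {l : List V} (h : Ch r a l b)
    (hF : ∀ u v, u ∈ a :: l → v ∈ a :: l → r u v → F u → F v) (ha : F a) : ∀ y ∈ a :: l, F y := by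
  induction l generalizing a with
  | nil => simpa using ha
  | cons x l ih =>
    have hx : F x := hF a x (by simp) (by simp) h.1 ha
    have := ih h.2 (fun u v hu hv => hF u v (List.mem_cons_of_mem _ hu) (List.mem_cons_of_mem _ hv)) hx
    intro y hy
    rcases List.mem_cons.1 hy with rfl | hy
    · exact ha
    · exact this y hy

theorem LC.start {n : ℕ} {E : V → V → Prop} {P : V → Prop} (h : LC G n E P) {u v : V}
    (huv : E u v) {y : V} (hy : P y) :
    ∃ m, Cyc E y m ∧ m.length + 1 = n ∧ ∀ z, z ∈ y :: m ↔ P z := by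
  obtain ⟨m, h1, h2, h3⟩ := h.edge u v huv
  obtain ⟨m', k1, k2, k3⟩ := h1.start ((h3 y).2 hy)
  exact ⟨m', k1, by simp at k2; omega, fun z => by rw [k3, h3]⟩

theorem LC.nbr {n : ℕ} {E : V → V → Prop} {P : V → Prop} (h : LC G n E P) {u v : V}
    (huv : E u v) {y : V} (hy : P y) : ∃ y', E y y' := by
  obtain ⟨m, ⟨_, _, h1⟩, -⟩ := h.start huv hy
  obtain ⟨y', -, h'⟩ := ch_first h1
  exact ⟨y', h'⟩

theorem LC.fst {n : ℕ} {E : V → V → Prop} {P : V → Prop} (h : LC G n E P) {u v : V}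
    (huv : E u v) : P u := by
  obtain ⟨m, h1, h2, h3⟩ := h.edge u v huv
  exact (h3 u).1 (by simp)

theorem rep_meet (R : TreeRep G T) {u v : V} (h : G.Adj u v) : ∃ t, t ∈ R.S u ∧ t ∈ R.S v :=
  (R.adj_iff u v h.ne).1 h

theorem rep_adj (R : TreeRep G T) {u v : V} {t : W} (h : u ≠ v) (hu : t ∈ R.S u) (hv : t ∈ R.S v) :
    G.Adj u v := (R.adj_iff u v h).2 ⟨t, hu, hv⟩

variable {x z : W}

/-- a local segment of a cycle at index `k`. -/
def LocSeg (R : TreeRep G T) (q : T.Walk x z) (X : Set W) (n : ℕ) (E : V → V → Prop) (P : V → Prop)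
    (k : ℕ) (a : V) (s : List V) (b : V) (τ : List V) : Prop :=
  Cyc E a (s ++ b :: τ) ∧ s.length + τ.length + 2 = n ∧ (∀ y, y ∈ a :: (s ++ b :: τ) ↔ P y) ∧
    q.getVert k ∈ R.S a ∧ q.getVert k ∈ R.S b ∧
    (s = [] ∨ ∃ X', IsCompOf T (X \ {w : W | w ∈ q.support}) X' ∧ ∀ y ∈ s, R.S y ⊆ X')

theorem local_or_special (R : TreeRep G T) {q : T.Walk x z} {r : W}
    (hqX : ∀ w ∈ q.support, w ∈ rootedSubtree T r x) (hq : q.IsPath)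
    {n : ℕ} {E : V → V → Prop} {P : V → Prop} (h : LC G n E P) {u v : V} {t : W} (huv : E u v)
    (htu : t ∈ R.S u) (htv : t ∈ R.S v) (htX : t ∈ rootedSubtree T r x) :
    (∃ a s b τ, LocSeg R q (rootedSubtree T r x) n E P (pr q t) a s b τ) ∨
    (∃ X' c0, IsCompOf T (rootedSubtree T r x \ {w : W | w ∈ q.support}) X' ∧
      ∀ y, P y → y ≠ c0 → R.S y ⊆ X') := by
  have hT := R.isTree
  by_cases hboth : q.getVert (pr q t) ∈ R.S u ∧ q.getVert (pr q t) ∈ R.S v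
  · obtain ⟨m, h1, h2, h3⟩ := h.edge u v huv
    exact Or.inl ⟨u, [], v, m, h1, by simp; omega, by simpa using h3, hboth.1, hboth.2, Or.inl rfl⟩
  have htq : t ∉ q.support := by
    intro hmem
    obtain ⟨k, rfl, hk⟩ := Walk.mem_support_iff_exists_getVert.1 hmem
    rw [pr_getVert hT hq hk] at hboth
    exact hboth ⟨htu, htv⟩
  obtain ⟨X', hX', htX', hsep⟩ := T1 hT hqX hq htX htq
  have key : ∀ u, P u → t ∈ R.S u → q.getVert (pr q t) ∉ R.S u → R.S u ⊆ X' := by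
    intro u _ htu hn e he
    by_contra hc
    exact hn (hsep _ (R.subtree_connected u) ⟨t, htu, htX'⟩ ⟨e, he, hc⟩)
  obtain ⟨u', hPu', hFu'⟩ : ∃ u', P u' ∧ R.S u' ⊆ X' := by
    by_cases hu : q.getVert (pr q t) ∈ R.S u
    · exact ⟨v, h.fst (h.symm _ _ huv), key v (h.fst (h.symm _ _ huv)) htv (fun hv => hboth ⟨hu, hv⟩)⟩
    · exact ⟨u, h.fst huv, key u (h.fst huv) htu hu⟩
  have step : ∀ y y', E y y' → R.S y ⊆ X' → ¬ R.S y' ⊆ X' → q.getVert (pr q t) ∈ R.S y' := by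
    intro y y' hE hy hy'
    obtain ⟨e, he, he'⟩ := rep_meet R (h.adj _ _ hE)
    obtain ⟨f, hf, hf'⟩ := Set.not_subset.1 hy'
    exact hsep _ (R.subtree_connected y') ⟨e, he', hy he⟩ ⟨f, hf, hf'⟩
  obtain ⟨l, hl, hln, hlm⟩ := h.start huv hPu'
  by_cases h1 : ∃ y ∈ l, ¬ R.S y ⊆ X'
  · obtain ⟨s1, a, rest, rfl, ha, hs1⟩ := exists_first h1
    by_cases h2 : ∃ y ∈ rest, ¬ R.S y ⊆ X'
    · obtain ⟨mid, b, s2, rfl, hb, hs2⟩ := exists_last h2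
      left
      have hc : Cyc E b (s2 ++ u' :: (s1 ++ a :: mid)) := by
        apply Cyc.rot
        simpa using hl
      have hch := hl.2.2
      simp only [ch_append] at hch
      obtain ⟨c1, -, c3⟩ := hch
      refine ⟨b, s2 ++ u' :: s1, a, mid, by simpa using hc, by simp at hln ⊢; omega, ?_, ?_, ?_, ?_⟩
      · intro y; rw [← hlm y]; simp; tauto
      · obtain ⟨y, hy, hE⟩ := ch_first c3
        refine step y b (h.symm _ _ hE) ?_ hb
        simp at hy
        rcases hy with hy | rfl
        · exact not_not.1 (hs2 y hy)
        · exact hFu'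
      · obtain ⟨y, hy, hE⟩ := ch_last c1
        refine step y a hE ?_ ha
        simp at hy
        rcases hy with rfl | hy
        · exact hFu'
        · exact not_not.1 (hs1 y hy)
      · right
        refine ⟨X', hX', ?_⟩
        intro y hy
        simp at hy
        rcases hy with hy | rfl | hy
        · exact not_not.1 (hs2 y hy)
        · exact hFu'
        · exact not_not.1 (hs1 y hy)
    · right
      push Not at h2
      refine ⟨X', a, hX', ?_⟩
      intro y hy hya
      rw [← hlm y] at hy
      simp at hy
      rcases hy with rfl | hy | hy | hy
      · exact hFu'
      · exact not_not.1 (hs1 y hy)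
      · exact absurd hy hya
      · exact h2 y hy
  · right
    push Not at h1
    refine ⟨X', u', hX', ?_⟩
    intro y hy hya
    rw [← hlm y] at hy
    simp [hya] at hy
    exact h1 y hy

/-- private vertices of the cycle give core points. -/
theorem private_core (R : TreeRep G T) {n : ℕ} {E : V → V → Prop} {P : V → Prop} (h : LC G n E P)
    {u v : V} (huv : E u v) {y : V} (hy : P y) {X' : Set W} (hX : R.S y ⊆ X') :
    ∃ u v t, E u v ∧ t ∈ R.S u ∧ t ∈ R.S v ∧ t ∈ X' := by
  obtain ⟨y', hE⟩ := h.nbr huv hy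
  obtain ⟨t, h1, h2⟩ := rep_meet R (h.adj _ _ hE)
  exact ⟨y, y', t, hE, h1, h2, hX h1⟩

/-- If all core points are far left or far right and at most one vertex crosses, then all
vertices but that one are on one side. -/
theorem one_side (R : TreeRep G T) {q : T.Walk x z} (hq : q.IsPath)
    {n : ℕ} {E : V → V → Prop} {P : V → Prop} (h : LC G n E P) {i j : ℕ} (hij : i < j) {w : V}
    (hw : ∀ s, q.getVert i ∈ R.S s → q.getVert j ∈ R.S s → s = w)
    (hcore : ∀ u v t, E u v → t ∈ R.S u → t ∈ R.S v → pr q t ≤ i ∨ j ≤ pr q t)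
    {u v : V} (huv : E u v) :
    (∀ s, P s → s ≠ w → ∃ t ∈ R.S s, pr q t ≤ i) ∨ (∀ s, P s → s ≠ w → ∃ t ∈ R.S s, j ≤ pr q t) := by
  have hT := R.isTree
  have hno : ∀ s, s ≠ w → ∀ t ∈ R.S s, ∀ t' ∈ R.S s, pr q t ≤ i → j ≤ pr q t' → False := by
    intro s hs t ht t' ht' h1 h2
    have := T2 hT hq (R.subtree_connected s) ht ht' h1 hij h2
    exact hs (hw s this.1 this.2)
  have stepL : ∀ s s', s' ≠ w → s ≠ w → E s s' → (∃ t ∈ R.S s, pr q t ≤ i) →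
      (∃ t ∈ R.S s', pr q t ≤ i) := by
    rintro s s' hs' hs hE ⟨t, ht, hti⟩
    obtain ⟨e, he, he'⟩ := rep_meet R (h.adj _ _ hE)
    rcases hcore s s' e hE he he' with h1 | h1
    · exact ⟨e, he', h1⟩
    · exact (hno s hs t ht e he hti h1).elim
  have stepR : ∀ s s', s' ≠ w → s ≠ w → E s s' → (∃ t ∈ R.S s, j ≤ pr q t) →
      (∃ t ∈ R.S s', j ≤ pr q t) := by
    rintro s s' hs' hs hE ⟨t, ht, hti⟩
    obtain ⟨e, he, he'⟩ := rep_meet R (h.adj _ _ hE)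
    rcases hcore s s' e hE he he' with h1 | h1
    · exact (hno s hs e he t ht h1 hti).elim
    · exact ⟨e, he', h1⟩
  obtain ⟨a, l, b, hch, hlw, hmem⟩ : ∃ a l b, Ch E a l b ∧ (∀ y ∈ a :: l, y ≠ w) ∧
      (∀ y, P y → y ≠ w → y ∈ a :: l) ∧ P a := by
    by_cases hPw : P w
    · obtain ⟨m, ⟨h1, h2, h3⟩, -, k3⟩ := h.start huv hPw
      match m, h2 with
      | a :: l, _ =>
        refine ⟨a, l, w, h3.2, ?_, ?_, (k3 a).1 (by simp)⟩
        · rintro y hy rfl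
          exact (List.nodup_cons.1 h1).1 hy
        · intro y hy hyw
          have := (k3 y).2 hy
          exact (List.mem_cons.1 this).resolve_left hyw
    · obtain ⟨m, ⟨h1, h2, h3⟩, -, k3⟩ := h.start huv (h.fst huv)
      refine ⟨u, m, u, h3, ?_, ?_, h.fst huv⟩
      · rintro y hy rfl
        exact hPw ((k3 y).1 hy)
      · intro y hy _
        exact (k3 y).2 hy
  obtain ⟨hmem, hPa⟩ := hmem
  obtain ⟨y', hE⟩ := h.nbr huv hPa
  obtain ⟨e, he, he'⟩ := rep_meet R (h.adj _ _ hE)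
  rcases hcore a y' e hE he he' with h1 | h1
  · left
    intro s hs hsw
    exact ch_prop hch (F := fun s => ∃ t ∈ R.S s, pr q t ≤ i)
      (fun u v hu hv hE hF => stepL u v (hlw v hv) (hlw u hu) hE hF) ⟨e, he, h1⟩ s (hmem s hs hsw)
  · right
    intro s hs hsw
    exact ch_prop hch (F := fun s => ∃ t ∈ R.S s, j ≤ pr q t)
      (fun u v hu hv hE hF => stepR u v (hlw v hv) (hlw u hu) hE hF) ⟨e, he, h1⟩ s (hmem s hs hsw)

theorem two_crossing (h2 : TwoConnected G) (R : TreeRep G T) {q : T.Walk x z} (hq : q.IsPath)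
    {n : ℕ} (hmax : ∀ a l, Cyc G.Adj a l → l.length + 1 ≤ n)
    {E E' : V → V → Prop} {P P' : V → Prop} (h : LC G n E P) (h' : LC G n E' P')
    {i j : ℕ} (hij : i < j)
    (hcore : ∀ u v t, E u v → t ∈ R.S u → t ∈ R.S v → pr q t ≤ i ∨ j ≤ pr q t)
    (hcore' : ∀ u v t, E' u v → t ∈ R.S u → t ∈ R.S v → pr q t ≤ i ∨ j ≤ pr q t)
    (hi : ∃ u v t, E u v ∧ t ∈ R.S u ∧ t ∈ R.S v ∧ pr q t ≤ i)
    (hj : ∃ u v t, E' u v ∧ t ∈ R.S u ∧ t ∈ R.S v ∧ j ≤ pr q t) :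
    ∃ w1 w2, w1 ≠ w2 ∧ q.getVert i ∈ R.S w1 ∧ q.getVert j ∈ R.S w1 ∧
      q.getVert i ∈ R.S w2 ∧ q.getVert j ∈ R.S w2 := by
  have hT := R.isTree
  by_contra hcon
  push Not at hcon
  obtain ⟨u, v, t, huv, htu, htv, ht⟩ := hi
  obtain ⟨u', v', t', huv', htu', htv', ht'⟩ := hj
  obtain ⟨w, hw⟩ : ∃ w, ∀ s, q.getVert i ∈ R.S s → q.getVert j ∈ R.S s → s = w := by
    by_cases he : ∃ w, q.getVert i ∈ R.S w ∧ q.getVert j ∈ R.S w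
    · obtain ⟨w, hw1, hw2⟩ := he
      refine ⟨w, fun s h1 h2 => ?_⟩
      by_contra hne
      exact hcon w s (fun e => hne e.symm) hw1 hw2 h1 h2
    · push Not at he
      exact ⟨u, fun s h1 h2 => absurd h2 (he s h1)⟩
  have hno : ∀ s, s ≠ w → ∀ t ∈ R.S s, ∀ t' ∈ R.S s, pr q t ≤ i → j ≤ pr q t' → False := by
    intro s hs t ht t' ht' h1 h2
    have := T2 hT hq (R.subtree_connected s) ht ht' h1 hij h2
    exact hs (hw s this.1 this.2)
  have hL : ∀ s, P s → s ≠ w → ∃ t ∈ R.S s, pr q t ≤ i := by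
    rcases one_side R hq h hij hw hcore huv with h1 | h1
    · exact h1
    · exfalso
      by_cases e : u = w
      · have e' : v ≠ w := fun e' => (h.adj _ _ huv).ne (e.trans e'.symm)
        obtain ⟨t2, k1, k2⟩ := h1 v (h.fst (h.symm _ _ huv)) e'
        exact hno v e' t htv t2 k1 ht k2
      · obtain ⟨t2, k1, k2⟩ := h1 u (h.fst huv) e
        exact hno u e t htu t2 k1 ht k2
  have hR : ∀ s, P' s → s ≠ w → ∃ t ∈ R.S s, j ≤ pr q t := by
    rcases one_side R hq h' hij hw hcore' huv' with h1 | h1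
    · exfalso
      by_cases e : u' = w
      · have e' : v' ≠ w := fun e' => (h'.adj _ _ huv').ne (e.trans e'.symm)
        obtain ⟨t2, k1, k2⟩ := h1 v' (h'.fst (h'.symm _ _ huv')) e'
        exact hno v' e' t2 k1 t' htv' k2 ht'
      · obtain ⟨t2, k1, k2⟩ := h1 u' (h'.fst huv') e
        exact hno u' e t2 k1 t' htu' k2 ht'
    · exact h1
  obtain ⟨m, a1, a2, a3⟩ := h.edge u v huv
  obtain ⟨m', b1, b2, b3⟩ := h'.edge u' v' huv'
  obtain ⟨s, k1, k2, k3⟩ := two_common h2 hmax (a1.mono h.adj) (by simp; omega) (b1.mono h'.adj)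
    (by simp; omega) w
  obtain ⟨t1, c1, c2⟩ := hL s ((a3 s).1 k1) k3
  obtain ⟨t2, c3, c4⟩ := hR s ((b3 s).1 k2) k3
  exact hno s k3 t1 c1 t2 c3 c2 c4

theorem surgery (R : TreeRep G T) {n : ℕ} (hmax : ∀ a l, Cyc G.Adj a l → l.length + 1 ≤ n)
    {u v w1 w2 a b : V} {s σ τ : List V} {y0 y : W}
    (huv : u ≠ v) (hus : u ∉ s) (hvs : v ∉ s) (hsn : s.Nodup) (hch : Ch G.Adj u s v)
    (hc : Cyc G.Adj a (σ ++ b :: τ)) (hlen : σ.length + τ.length + 2 = n)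
    (hle : σ.length ≤ s.length)
    (hw : w1 ≠ w2) (hu : y0 ∈ R.S u) (hv : y0 ∈ R.S v) (hw1 : y0 ∈ R.S w1) (hw2 : y0 ∈ R.S w2)
    (ha : y ∈ R.S a) (hb : y ∈ R.S b) (hw1' : y ∈ R.S w1) (hw2' : y ∈ R.S w2)
    (hw1s : w1 ∉ s) (hw2s : w2 ∉ s)
    (hdu : u ∉ a :: (σ ++ b :: τ)) (hdv : v ∉ a :: (σ ++ b :: τ))
    (hd1 : w1 ∉ a :: (σ ++ b :: τ)) (hd2 : w2 ∉ a :: (σ ++ b :: τ))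
    (hds : ∀ e ∈ s, e ∉ a :: (σ ++ b :: τ)) : False := by
  obtain ⟨p, p', hpp, hpv, hpu, hp0, hp0', hpy, hpy', hps, hps', hpd, hpd'⟩ : ∃ p p', p ≠ p' ∧ p ≠ v ∧ p' ≠ u ∧
      y0 ∈ R.S p ∧ y0 ∈ R.S p' ∧ y ∈ R.S p ∧ y ∈ R.S p' ∧ p ∉ s ∧ p' ∉ s ∧
      p ∉ a :: (σ ++ b :: τ) ∧ p' ∉ a :: (σ ++ b :: τ) := by
    by_cases h : u = w2 ∨ v = w1
    · exact ⟨w2, w1, hw.symm, by grind, by grind, hw2, hw1, hw2', hw1', hw2s, hw1s, hd2, hd1⟩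
    · exact ⟨w1, w2, hw, by grind, by grind, hw1, hw2, hw1', hw2', hw1s, hw2s, hd1, hd2⟩
  obtain ⟨c1, c2, c3⟩ := hc
  simp only [ch_append] at c3
  have hap : G.Adj a p := rep_adj R (fun e => hpd (by simp [e])) ha hpy
  have hp'b : G.Adj p' b := rep_adj R (fun e => hpd' (by simp [e])) hpy' hb
  obtain ⟨xs, hxs, hxsn, hxsp⟩ : ∃ xs, Ch G.Adj a xs u ∧ (xs ++ [u]).Nodup ∧ ∀ e ∈ xs, e = p := by
    by_cases e : p = u
    · exact ⟨[], by simpa [e] using hap, by simp, by simp⟩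
    · exact ⟨[p], by simpa using ⟨hap, rep_adj R e hp0 hu⟩, by simpa using e, by simp⟩
  obtain ⟨ys, hys, hysn, hysp⟩ : ∃ ys, Ch G.Adj v ys b ∧ (v :: ys).Nodup ∧ ∀ e ∈ ys, e = p' := by
    by_cases e : v = p'
    · exact ⟨[], by simpa [e] using hp'b, by simp, by simp⟩
    · exact ⟨[p'], by simpa using ⟨rep_adj R e hv hp0', hp'b⟩, by simpa using e, by simp⟩
  have := hmax a (xs ++ u :: (s ++ v :: (ys ++ b :: τ))) ⟨?_, ?_, ?_⟩
  · simp at this; omega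
  · simp only [List.nodup_cons, List.nodup_append, List.mem_append, List.mem_cons, not_or] at c1 hxsn hysn hdu hdv hpd hpd' hds ⊢
    clear hmax hxs hys c2 c3 hch
    and_intros <;> grind
  · simp; omega
  · simp only [ch_append]; exact ⟨hxs, hch, hys, c3.2⟩
end main


section
variable {V W : Type} {G : SimpleGraph V} {T : SimpleGraph W} {x z : W}

/-- The two crossing vertices for a window of minimal length. -/
theorem window_pair (h2 : TwoConnected G) (R : TreeRep G T) {q : T.Walk x z} {r : W}
    (hqX : ∀ w ∈ q.support, w ∈ rootedSubtree T r x) (hq : q.IsPath)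
    {n : ℕ} (hmax : ∀ a l, Cyc G.Adj a l → l.length + 1 ≤ n)
    {ι : Type} {E : ι → V → V → Prop} {P : ι → V → Prop} (hLC : ∀ i, LC G n (E i) (P i))
    {Hits : ι → ℕ → Prop}
    (hHits : ∀ i k, Hits i k ↔ ∃ u v t, E i u v ∧ t ∈ R.S u ∧ t ∈ R.S v ∧
      t ∈ rootedSubtree T r x ∧ pr q t = k)
    {i0 d : ℕ} (hwin : ∀ c, ∃ k, i0 ≤ k ∧ k ≤ i0 + (d + 1) ∧ Hits c k)
    (hmin : ∀ j, ¬ ∀ c, ∃ k, j ≤ k ∧ k ≤ j + d ∧ Hits c k) :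
    ∃ w1 w2, w1 ≠ w2 ∧ ∀ k, i0 ≤ k → k ≤ i0 + (d + 1) →
      q.getVert k ∈ R.S w1 ∧ q.getVert k ∈ R.S w2 := by
  have hT := R.isTree
  have e1 := hmin i0
  have e2 := hmin (i0 + 1)
  push Not at e1 e2
  obtain ⟨c2, hc2⟩ := e1
  obtain ⟨c1, hc1⟩ := e2
  have out : ∀ c t, (∃ u v, E c u v ∧ t ∈ R.S u ∧ t ∈ R.S v) → pr q t = 0 ∨ Hits c (pr q t) := by
    rintro c t ⟨u, v, h1, h2, h3⟩
    by_cases ht : t ∈ rootedSubtree T r x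
    · exact Or.inr ((hHits _ _).2 ⟨u, v, t, h1, h2, h3, ht, rfl⟩)
    · exact Or.inl (T0 hT hqX hq ht)
  obtain ⟨k1, a1, b1, hk1⟩ := hwin c1
  obtain ⟨k2, a2, b2, hk2⟩ := hwin c2
  have hk1' : k1 ≤ i0 := by
    by_contra h
    exact hc1 k1 (by omega) (by omega) hk1
  have hk2' : i0 + (d + 1) ≤ k2 := by
    by_contra h
    exact hc2 k2 (by omega) (by omega) hk2
  obtain ⟨u1, v1, t1, f1, f2, f3, -, f5⟩ := (hHits _ _).1 hk1
  obtain ⟨u2, v2, t2, g1, g2, g3, -, g5⟩ := (hHits _ _).1 hk2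
  have hjl : i0 + (d + 1) ≤ q.length := by
    have := pr_le q t2
    omega
  obtain ⟨w1, w2, hw, p1, p2, p3, p4⟩ := two_crossing h2 R hq hmax (hLC c1) (hLC c2)
    (i := i0) (j := i0 + (d + 1)) (by omega)
    (by
      intro u v t h1 h2 h3
      by_contra hcon
      rcases out c1 t ⟨u, v, h1, h2, h3⟩ with h | h
      · omega
      · exact hc1 _ (by omega) (by omega) h)
    (by
      intro u v t h1 h2 h3
      by_contra hcon
      rcases out c2 t ⟨u, v, h1, h2, h3⟩ with h | h
      · omega
      · exact hc2 _ (by omega) (by omega) h)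
    ⟨u1, v1, t1, f1, f2, f3, by omega⟩ ⟨u2, v2, t2, g1, g2, g3, by omega⟩
  have mid : ∀ w, q.getVert i0 ∈ R.S w → q.getVert (i0 + (d + 1)) ∈ R.S w →
      ∀ k, i0 ≤ k → k ≤ i0 + (d + 1) → q.getVert k ∈ R.S w := by
    intro w h1 h2 k hk hk'
    rcases hk.eq_or_lt with rfl | hlt
    · exact h1
    · exact (T2 hT hq (R.subtree_connected w) h1 h2 (i := i0) (j := k)
        (pr_getVert hT hq (by omega)).le hlt (by rw [pr_getVert hT hq hjl]; exact hk')).2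
  exact ⟨w1, w2, hw, fun k hk hk' => ⟨mid w1 p1 p2 k hk hk', mid w2 p3 p4 k hk hk'⟩⟩

theorem main_abs (h2 : TwoConnected G) (R : TreeRep G T) {q : T.Walk x z} {r : W}
    (hqX : ∀ w ∈ q.support, w ∈ rootedSubtree T r x) (hq : q.IsPath)
    {n : ℕ} (hmax : ∀ a l, Cyc G.Adj a l → l.length + 1 ≤ n)
    {ι : Type} {E : ι → V → V → Prop} {P : ι → V → Prop} (hLC : ∀ i, LC G n (E i) (P i))
    (hcap : ∀ i, ∃ u v t, E i u v ∧ t ∈ R.S u ∧ t ∈ R.S v ∧ t ∈ rootedSubtree T r x) :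
    ∃ A : Set V, A.Finite ∧ A.ncard ≤ 4 ∧
      ((∀ i, ∃ v ∈ A, P i v) ∨
        ∃ X' : Set W, IsCompOf T (rootedSubtree T r x \ {w : W | w ∈ q.support}) X' ∧
          ∀ i, (∀ v ∈ A, ¬ P i v) → ∃ u v t, E i u v ∧ t ∈ R.S u ∧ t ∈ R.S v ∧ t ∈ X') := by
  classical
  have hT := R.isTree
  rcases isEmpty_or_nonempty ι with hι | ⟨⟨ι0⟩⟩
  · exact ⟨∅, Set.finite_empty, by simp, Or.inl fun i => (hι.false i).elim⟩
  by_cases hspec : ∃ i0 X' c0, IsCompOf T (rootedSubtree T r x \ {w : W | w ∈ q.support}) X' ∧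
      ∀ y, P i0 y → y ≠ c0 → R.S y ⊆ X'
  · obtain ⟨i0, X', c0, hX', hP⟩ := hspec
    refine ⟨{c0}, Set.finite_singleton _, by simp, Or.inr ⟨X', hX', fun i hi => ?_⟩⟩
    obtain ⟨u, v, t, huv, -⟩ := hcap i
    obtain ⟨u', v', t', huv', -⟩ := hcap i0
    obtain ⟨m, hm1, hm2, hm3⟩ := (hLC i).edge u v huv
    obtain ⟨m', hm1', hm2', hm3'⟩ := (hLC i0).edge u' v' huv'
    obtain ⟨s, hs1, hs2, hs3⟩ := two_common h2 hmax (hm1.mono (hLC i).adj) (by simp; omega)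
      (hm1'.mono (hLC i0).adj) (by simp; omega) c0
    exact private_core R (hLC i) huv ((hm3 s).1 hs1) (hP s ((hm3' s).1 hs2) hs3)
  set Hits : ι → ℕ → Prop := fun i k => ∃ u v t, E i u v ∧ t ∈ R.S u ∧ t ∈ R.S v ∧
      t ∈ rootedSubtree T r x ∧ pr q t = k with hHits
  have hex : ∃ d, ∃ i0, ∀ c, ∃ k, i0 ≤ k ∧ k ≤ i0 + d ∧ Hits c k := by
    refine ⟨q.length, 0, fun c => ?_⟩
    obtain ⟨u, v, t, h1, h2, h3, h4⟩ := hcap c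
    exact ⟨pr q t, Nat.zero_le _, by have := pr_le q t; omega, u, v, t, h1, h2, h3, h4, rfl⟩
  obtain ⟨d, ⟨i0, hwin⟩, hdmin⟩ : ∃ d, (∃ i0, ∀ c, ∃ k, i0 ≤ k ∧ k ≤ i0 + d ∧ Hits c k) ∧
      ∀ d' < d, ¬ ∃ i0, ∀ c, ∃ k, i0 ≤ k ∧ k ≤ i0 + d' ∧ Hits c k :=
    ⟨Nat.find hex, Nat.find_spec hex, fun d' h => Nat.find_min hex h⟩
  have hloc : ∀ c, ∃ k a s b τ, i0 ≤ k ∧ k ≤ i0 + d ∧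
      LocSeg R q (rootedSubtree T r x) n (E c) (P c) k a s b τ := by
    intro c
    obtain ⟨k, hk1, hk2, u, v, t, h1, h2, h3, h4, rfl⟩ := hwin c
    rcases local_or_special R hqX hq (hLC c) h1 h2 h3 h4 with ⟨a, s, b, τ, h⟩ | ⟨X', c0, h⟩
    · exact ⟨_, a, s, b, τ, hk1, hk2, h⟩
    · exact absurd ⟨c, X', c0, h⟩ hspec
  obtain ⟨w1, w2, hw, hww⟩ : ∃ w1 w2, w1 ≠ w2 ∧ ∀ k, i0 ≤ k → k ≤ i0 + d →
      q.getVert k ∈ R.S w1 ∧ q.getVert k ∈ R.S w2 := by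
    rcases d with _ | d
    · obtain ⟨k, a, s, b, τ, hk1, hk2, hc, -, -, ha, hb, -⟩ := hloc ι0
      refine ⟨a, b, ?_, fun k' h1 h2 => ?_⟩
      · rintro rfl
        have := hc.1
        simp at this
      · obtain rfl : k' = k := by omega
        exact ⟨ha, hb⟩
    · exact window_pair h2 R hqX hq hmax hLC (fun i k => Iff.rfl) hwin
        (fun j hj => hdmin d (by omega) ⟨j, hj⟩)
  obtain ⟨c0, k0, u, s, v, τ0, hk01, hk02, hseg, hlong⟩ : ∃ c k a s b τ, i0 ≤ k ∧ k ≤ i0 + d ∧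
      LocSeg R q (rootedSubtree T r x) n (E c) (P c) k a s b τ ∧
      ∀ c' k' a' s' b' τ', i0 ≤ k' → k' ≤ i0 + d →
        LocSeg R q (rootedSubtree T r x) n (E c') (P c') k' a' s' b' τ' →
        s'.length ≤ s.length := by
    set L : Set ℕ := {l | ∃ c k a s b τ, i0 ≤ k ∧ k ≤ i0 + d ∧
      LocSeg R q (rootedSubtree T r x) n (E c) (P c) k a s b τ ∧ s.length = l} with hL
    have hne : L.Nonempty := by
      obtain ⟨k, a, s, b, τ, h1, h2, h3⟩ := hloc ι0
      exact ⟨s.length, ι0, k, a, s, b, τ, h1, h2, h3, rfl⟩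
    have hbd : BddAbove L := by
      refine ⟨n, ?_⟩
      rintro l ⟨c, k, a, s, b, τ, h1, h2, h3, rfl⟩
      have := h3.2.1
      omega
    obtain ⟨c, k, a, s, b, τ, h1, h2, h3, h4⟩ := Nat.sSup_mem hne hbd
    refine ⟨c, k, a, s, b, τ, h1, h2, h3, ?_⟩
    intro c' k' a' s' b' τ' h1' h2' h3'
    rw [h4]
    exact le_csSup hbd ⟨c', k', a', s', b', τ', h1', h2', h3', rfl⟩
  obtain ⟨hcyc, hlen, hmem, hu, hv, hs⟩ := hseg
  have hnd := hcyc.1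
  have hch := (hcyc.mono (hLC c0).adj).2.2
  simp only [ch_append] at hch
  have hws : ∀ w, q.getVert k0 ∈ R.S w → w ∉ s := by
    intro w hw hm
    rcases hs with rfl | ⟨X', hX', hsX⟩
    · simp at hm
    · exact (hX'.2.1 (hsX w hm hw)).2 (q.getVert_mem_support k0)
  have hwk := hww k0 hk01 hk02
  have main : ∀ c, (∀ y ∈ ({u, v, w1, w2} : Finset V), ¬ P c y) → ∃ y ∈ s, P c y := by
    intro c hA
    by_contra hno
    push Not at hno
    obtain ⟨k, a, σ, b, τ, h1, h2, h3⟩ := hloc c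
    have hle := hlong c k a σ b τ h1 h2 h3
    obtain ⟨g1, g2, g3, g4, g5, -⟩ := h3
    have hn := hww k h1 h2
    refine surgery R hmax (u := u) (v := v) (w1 := w1) (w2 := w2) (a := a) (b := b) (s := s)
      (σ := σ) (τ := τ) (y0 := q.getVert k0) (y := q.getVert k) ?_ ?_ ?_ ?_ ?_
      (g1.mono (hLC c).adj) g2 hle hw hu hv hwk.1 hwk.2 g4 g5 hn.1 hn.2
      (hws _ hwk.1) (hws _ hwk.2) ?_ ?_ ?_ ?_ ?_
    · rintro rfl; simp at hnd
    · exact hws _ hu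
    · exact hws _ hv
    · exact (List.nodup_append.1 (List.nodup_cons.1 hnd).2).1
    · exact hch.1
    · rw [g3]; exact hA _ (by simp)
    · rw [g3]; exact hA _ (by simp)
    · rw [g3]; exact hA _ (by simp)
    · rw [g3]; exact hA _ (by simp)
    · intro e he
      rw [g3]; exact hno e he
  refine ⟨(({u, v, w1, w2} : Finset V) : Set V), Finset.finite_toSet _, ?_, ?_⟩
  · rw [Set.ncard_coe_finset]
    exact Finset.card_le_four
  rcases hs with rfl | ⟨X', hX', hsX⟩
  · left
    intro i
    by_contra hcon
    push Not at hcon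
    obtain ⟨y, hy, -⟩ := main i (fun y hy => hcon y (by exact_mod_cast hy))
    simp at hy
  · right
    refine ⟨X', hX', fun i hi => ?_⟩
    obtain ⟨y, hy, hPy⟩ := main i (fun y hy => hi y (by exact_mod_cast hy))
    obtain ⟨u', v', t', huv', -⟩ := hcap i
    exact private_core R (hLC i) huv' hPy (hsX y hy)

end

/-- For a 2-connected chordal `G` with minimal rooted tree representation,
a subtree `X` rooted at `x`, the `x`–`z` path `Q = q` in `X`, and a family `𝒞 = C` of
longest cycles for which `X` has the core capture property, there is `A ⊆ V(G)` with
`|A| ≤ 4` such that the cycles of `𝒞` disjoint from `A` either form an empty family, or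
some component `X'` of `X − V(Q)` has the core capture property for them. -/
theorem cycle_trans {V W : Type} [Fintype V] [Fintype W] (G : SimpleGraph V)
    (T : SimpleGraph W) (hchordal : IsChordal G) (h2 : TwoConnected G)
    (R : TreeRep G T) (hmin : R.IsMinimal) (r : W)
    (x z : W) (hz : z ∈ rootedSubtree T r x)
    (q : T.Walk x z) (hq : q.IsPath) (hqX : ∀ w ∈ q.support, w ∈ rootedSubtree T r x)
    {ι : Type} (a : ι → V) (C : ∀ i : ι, G.Walk (a i) (a i))
    (hC : ∀ i : ι, IsLongestCycle G (C i))
    (hcap : ∀ i : ι, (R.core (C i).toSubgraph ∩ rootedSubtree T r x).Nonempty) :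
    ∃ A : Set V, A.Finite ∧ A.ncard ≤ 4 ∧
      ((∀ i : ι, ∃ v ∈ A, v ∈ (C i).support) ∨
        ∃ X' : Set W, IsCompOf T (rootedSubtree T r x \ {w : W | w ∈ q.support}) X' ∧
          ∀ i : ι, (∀ v ∈ A, v ∉ (C i).support) →
            (R.core (C i).toSubgraph ∩ X').Nonempty) := by
  rcases isEmpty_or_nonempty ι with hι | ⟨⟨ι0⟩⟩
  · exact ⟨∅, Set.finite_empty, by simp, Or.inl fun i => (hι.false i).elim⟩
  have hlen : ∀ i, (C i).length = (C ι0).length := fun i =>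
    le_antisymm ((hC ι0).2 _ _ (hC i).1) ((hC i).2 _ _ (hC ι0).1)
  obtain ⟨A, hA, hA4, hres⟩ := main_abs h2 R hqX hq (n := (C ι0).length)
    (fun b l hl => by
      obtain ⟨c, hc, hcl⟩ := walk_of_cyc hl
      rw [← hcl]
      exact (hC ι0).2 _ _ hc)
    (E := fun i => (C i).toSubgraph.Adj) (P := fun i y => y ∈ (C i).support)
    (fun i => hlen i ▸ lc_of_walk (C i) (hC i).1)
    (fun i => by
      obtain ⟨t, ⟨u, v, h1, h2, h3⟩, ht⟩ := hcap i
      exact ⟨u, v, t, h1, h2, h3, ht⟩)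
  refine ⟨A, hA, hA4, ?_⟩
  rcases hres with h | ⟨X', hX', h⟩
  · exact Or.inl h
  · refine Or.inr ⟨X', hX', fun i hi => ?_⟩
    obtain ⟨u, v, t, h1, h2, h3, h4⟩ := h i hi
    exact ⟨t, ⟨u, v, h1, h2, h3⟩, h4⟩
end

section
/- If T is an n-vertex tree with root r, then ccg(T) ≤ ccg(T, r) ≤ 1 + ⌊log₂ n⌋. -/
open SimpleGraph

/-- A connected set meeting a set closed under adjacency is contained in it. -/
lemma connected_subset_of_closed {W : Type} {T : SimpleGraph W} {A C : Set W}
    (hA : (T.induce A).Connected) {a : W} (haA : a ∈ A) (haC : a ∈ C)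
    (hcl : ∀ ⦃u v : W⦄, u ∈ C → v ∈ A → T.Adj u v → v ∈ C) : A ⊆ C := by
  have key : ∀ (u v : A) (_ : (T.induce A).Walk u v), (u : W) ∈ C → (v : W) ∈ C := by
    intro u v p
    induction p with
    | nil => exact id
    | cons h p ih => exact fun hu => ih (hcl hu (Subtype.mem _) h)
  intro b hb
  obtain ⟨p⟩ := hA.preconnected ⟨a, haA⟩ ⟨b, hb⟩
  exact key _ _ p haC

/-- In an acyclic graph, a vertex outside a connected set has at most one neighbour in it. -/
lemma unique_nbr {W : Type} {T : SimpleGraph W} (hT : T.IsAcyclic) {C : Set W}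
    (hC : (T.induce C).Connected) {z c d : W} (hz : z ∉ C) (hc : c ∈ C) (hd : d ∈ C)
    (hzc : T.Adj z c) (hzd : T.Adj z d) : c = d := by
  obtain ⟨q, hq⟩ := hC.exists_isPath ⟨c, hc⟩ ⟨d, hd⟩
  let f : T.induce C →g T := (Embedding.induce C).toHom
  have hp : (q.map f).IsPath :=
    Walk.map_isPath_of_injective (f := f) Subtype.val_injective hq
  have hzs : z ∉ (q.map f).support := by
    rw [Walk.support_map]
    intro h
    obtain ⟨y, -, hy⟩ := List.mem_map.1 h
    exact hz (hy ▸ y.2)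
  have h1 : (Walk.cons (show T.Adj z (f ⟨c, hc⟩) from hzc) (q.map f)).IsPath :=
    (Walk.cons_isPath_iff _ _).2 ⟨hp, hzs⟩
  have h2 : (Walk.cons (show T.Adj z (f ⟨d, hd⟩) from hzd) Walk.nil).IsPath := by
    rw [Walk.cons_isPath_iff]
    refine ⟨Walk.IsPath.nil, ?_⟩
    rw [Walk.support_nil, List.mem_singleton]
    exact hzd.ne
  have h3 := hT.path_unique ⟨_, h1⟩ ⟨_, h2⟩
  have h4 := congrArg (fun w : T.Path z (f ⟨d, hd⟩) => w.1.length) h3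
  simp at h4
  have := h4.eq
  exact congrArg Subtype.val this

/-- There is a path from `x` all of whose leftover components have at most half the size. -/
lemma exists_half_path {W : Type} [Fintype W] {T : SimpleGraph W} (hT : T.IsAcyclic)
    {X : Set W} (hX : (T.induce X).Connected) {x : W} (hx : x ∈ X) (n : ℕ) :
    ∀ (z : W) (p : T.Walk x z), p.IsPath → (∀ w ∈ p.support, w ∈ X) →
      (∀ C, IsCompOf T (X \ {w : W | w ∈ p.support}) C → X.ncard < 2 * C.ncard →
        ∀ u ∈ p.support, ∀ c ∈ C, T.Adj u c → u = z) →
      Fintype.card W ≤ n + p.length →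
      ∃ (z : W) (p : T.Walk x z), p.IsPath ∧ (∀ w ∈ p.support, w ∈ X) ∧
        ∀ C, IsCompOf T (X \ {w : W | w ∈ p.support}) C → 2 * C.ncard ≤ X.ncard := by
  induction n with
  | zero =>
    intro z p hp _ _ hlen
    have := hp.length_lt
    omega
  | succ n ih =>
    intro z p hp hpX hinv hlen
    by_cases hgood : ∀ C, IsCompOf T (X \ {w : W | w ∈ p.support}) C → 2 * C.ncard ≤ X.ncard
    · exact ⟨z, p, hp, hpX, hgood⟩
    push Not at hgood
    obtain ⟨C, hC, hbig⟩ := hgood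
    obtain ⟨⟨c0, hc0⟩, hCs, hCc, hCcl⟩ := id hC
    have hadj : ∃ u ∈ p.support, ∃ c ∈ C, T.Adj u c := by
      by_contra hno
      push Not at hno
      have : X ⊆ C := by
        refine connected_subset_of_closed hX (hCs hc0).1 hc0 ?_
        intro u v hu hv huv
        refine hCcl hu ⟨hv, fun hvp => hno v hvp u hu huv.symm⟩ huv
      exact (hCs (this hx)).2 p.start_mem_support
    obtain ⟨u, hu, c, hc, huc⟩ := hadj
    obtain rfl := hinv C hC hbig u hu c hc huc
    have hsup : ∀ w, w ∈ (p.concat huc).support ↔ w ∈ p.support ∨ w = c := by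
      intro w
      simp [Walk.support_concat]
    refine ih c (p.concat huc) (hp.concat (hCs hc).2 huc) ?_ ?_ ?_
    · intro w hw
      rcases (hsup w).1 hw with h | rfl
      · exact hpX w h
      · exact (hCs hc).1
    · intro C' hC' hbig' v hv c' hc' hvc'
      obtain ⟨-, hCs', hCc', -⟩ := hC'
      have hCs'' : C' ⊆ X \ {w : W | w ∈ p.support} := fun w hw =>
        ⟨(hCs' hw).1, fun h => (hCs' hw).2 ((hsup w).2 (Or.inl h))⟩
      have hint : ∃ a ∈ C', a ∈ C := by
        by_contra hno
        push Not at hno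
        have hdis : Disjoint C' C := Set.disjoint_left.2 hno
        have h1 := Set.ncard_union_eq hdis (Set.toFinite _) (Set.toFinite _)
        have h2 : (C' ∪ C).ncard ≤ X.ncard :=
          Set.ncard_le_ncard (Set.union_subset (fun w hw => (hCs' hw).1)
            (fun w hw => (hCs hw).1)) (Set.toFinite _)
        omega
      obtain ⟨a, ha', ha⟩ := hint
      have hsub : C' ⊆ C := connected_subset_of_closed hCc' ha' ha
        (fun u v hu hv huv => hCcl hu (hCs'' hv) huv)
      rcases (hsup v).1 hv with h | h
      · obtain rfl := hinv C hC hbig v h c' (hsub hc') hvc'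
        have hcc := unique_nbr hT hCc (fun hvC => (hCs hvC).2 h) hc (hsub hc') huc hvc'
        exact absurd ((hsup c').2 (Or.inr hcc.symm)) (hCs' hc').2
      · exact h
    · rw [Walk.length_concat]
      omega

lemma cutterWins_of_lt {W : Type} [Fintype W] {T : SimpleGraph W} (hT : T.IsAcyclic) (t : ℕ) :
    ∀ (X : Set W) (x : W), (T.induce X).Connected → x ∈ X → X.ncard < 2 ^ t →
      cutterWins T t X x := by
  induction t with
  | zero =>
    intro X x _ hx h
    have : 0 < X.ncard := (Set.ncard_pos (Set.toFinite _)).2 ⟨x, hx⟩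
    rw [pow_zero] at h
    omega
  | succ t ih =>
    intro X x hX hx h
    obtain ⟨z, p, hp, hpX, hhalf⟩ := exists_half_path hT hX hx (Fintype.card W) x Walk.nil
      Walk.IsPath.nil (by simpa using hx) (by simp) (by simp)
    refine ⟨z, hpX z p.end_mem_support, p, hp, hpX, Or.inr ?_⟩
    intro X' x' hX' hx' _
    refine ih X' x' hX'.2.2.1 hx' ?_
    have := hhalf X' hX'
    rw [pow_succ] at h
    omega

/-- If `T` is an `n`-vertex tree with root `r`, then
`ccg(T) ≤ ccg(T, r) ≤ 1 + ⌊log₂ n⌋`. -/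
theorem ccg_le_log {W : Type} [Fintype W] (T : SimpleGraph W) (hT : T.IsTree) (r : W) :
    ccg T ≤ ccgOn T Set.univ r ∧
      ccgOn T Set.univ r ≤ 1 + Nat.log 2 (Fintype.card W) := by
  refine ⟨Nat.sInf_le ⟨r, rfl⟩, Nat.sInf_le ?_⟩
  refine cutterWins_of_lt hT.isAcyclic _ _ _ ?_ (Set.mem_univ r) ?_
  · exact (induceUnivIso T).connected_iff.2 hT.connected
  · rw [Set.ncard_univ, Nat.card_eq_fintype_card, add_comm]
    exact Nat.lt_pow_succ_log_self one_lt_two _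
end
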